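/- For every positive integer k, every 2-connected non-bipartite (finite simple) graph of minimum degree at least k + 1 contains cycles of all lengths modulo k; that is, for every integer r there is a cycle in the graph whose length is congruent to r modulo k. -/

import Mathlib

/-!
Everything rests on a path theorem (`Inst.adm`). Let `G` live on `Ω ∪ {x, y}`, where `x`, `y` are
nonadjacent roots and adding the edge `xy` would make the graph 2-connected. If all vertices of
`Ω` have degree at least `k + 1`, then there are `k` *admissible* paths from `x` to `y`: their
lengths form an arithmetic progression with difference one or two.

**Proof of the path theorem**, by induction on `|Ω|`. Take a core `S` around `x` in which `x` reaches
every vertex of a set `T` by paths with `l` admissible lengths. Contracting `T` in a component of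
the rest gives a smaller instance. If every vertex there loses at most `l` neighbours in `S` (those
in `T` are replaced by one), induction gives `k + 1 - l` further admissible lengths, and the sumset
of two progressions with `l` and `k + 1 - l` terms contains one with `k` terms (`AP.sum`). This is
`Ctx.step`; its only obstruction is a subregion with no edge to `T`. The cores used are

* a maximal clique through `x` (`Ctx.clique_core`), whence `x` may be assumed to lie in no triangle
  (`Ctx.triangle`);
* a clique of common neighbours of two neighbours of `x` (`Ctx.book_core`), which excludes the
  configuration of `Ctx.book`;
* a complete bipartite graph with `x` on the smaller side, that side being as large as possible
  (`Ctx.bip_core`). An obstructing region here can hang on two vertices `x`, `a` and one more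
  vertex; then paths inside and outside that region are combined (`Ctx.bad`), which uses that two
  admissible paths exist even if one vertex has small degree (`two_paths`).

When `y` has no neighbour outside the core, the same analysis at `y` shows that the two roots have
the same neighbours, and a twin version of each step works with one of these neighbours in the role
of `y`. For the last core this combination is `Ctx.adm`.

**From paths to cycles.** If `k` is odd, apply the path theorem to the ends of any edge; the
resulting `k` cycle lengths have difference one or two, both coprime to `k`. If `k = 2m`, let `H` be
a maximum cut of `G`: it is connected, bipartite and has minimum degree at least `m + 1`. Lengths of
paths with given ends in `H` have fixed parity, so `m` admissible ones cover all residues of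
that parity modulo `2m`. Closing up by an edge of `H` gives the even lengths, and closing up by an
edge of `G` inside a colour class gives the odd ones. If `H` is not 2-connected, this is done in a
smallest set of vertices that one vertex separates from the rest of `H`; the edge for odd lengths is
an edge of `G` leaving that set (`even_case`).
-/

open SimpleGraph

/-- A finite simple graph is 2-connected if it is connected, has at least 3 vertices,
and remains connected after deleting any single vertex. -/
def TwoConnected {V : Type*} [Fintype V] (G : SimpleGraph V) : Prop :=
  G.Connected ∧ 3 ≤ Fintype.card V ∧
    ∀ v : V, (G.induce ({v}ᶜ : Set V)).Connected

/-- A set of vertices is independent if it spans no edge. -/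
def IndepSet {V : Type*} (G : SimpleGraph V) (A : Set V) : Prop :=
  ∀ a ∈ A, ∀ b ∈ A, ¬ G.Adj a b

/-- A graph is non-bipartite if its vertex set cannot be partitioned into two
independent sets. -/
def NonBipartite {V : Type*} (G : SimpleGraph V) : Prop :=
  ¬ ∃ A B : Set V, A ∪ B = Set.univ ∧ A ∩ B = ∅ ∧ IndepSet G A ∧ IndepSet G B

set_option linter.unusedSectionVars false

/-! ### Paths, progressions and connectivity by cuts -/

namespace CycMod

variable {V : Type*}

/-- `Pth G n D x y`: there is a path of length `n` from `x` to `y` in `G` all of whose vertices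
lie in `D`. -/
def Pth (G : SimpleGraph V) (n : ℕ) (D : Finset V) (x y : V) : Prop :=
  ∃ p : G.Walk x y, p.IsPath ∧ p.length = n ∧ ∀ z ∈ p.support, z ∈ D

lemma Pth.mono {G : SimpleGraph V} {n : ℕ} {D D' : Finset V} {x y : V}
    (h : Pth G n D x y) (hD : D ⊆ D') : Pth G n D' x y := by
  obtain ⟨p, h1, h2, h3⟩ := h
  exact ⟨p, h1, h2, fun z hz => hD (h3 z hz)⟩

lemma Pth.symm {G : SimpleGraph V} {n : ℕ} {D : Finset V} {x y : V}
    (h : Pth G n D x y) : Pth G n D y x := by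
  obtain ⟨p, h1, h2, h3⟩ := h
  exact ⟨p.reverse, h1.reverse, by simpa using h2, fun z hz => h3 z (by simpa using hz)⟩

lemma Pth.left_mem {G : SimpleGraph V} {n : ℕ} {D : Finset V} {x y : V}
    (h : Pth G n D x y) : x ∈ D := by
  obtain ⟨p, h1, h2, h3⟩ := h
  exact h3 _ p.start_mem_support

lemma Pth.right_mem {G : SimpleGraph V} {n : ℕ} {D : Finset V} {x y : V}
    (h : Pth G n D x y) : y ∈ D := h.symm.left_mem

lemma Pth.refl (G : SimpleGraph V) {D : Finset V} {x : V} (hx : x ∈ D) : Pth G 0 D x x :=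
  ⟨Walk.nil, by simp, rfl, by simpa using hx⟩

variable [DecidableEq V]

/-- Gluing two paths that share only the vertex `z`. -/
lemma Pth.trans {G : SimpleGraph V} {m n : ℕ} {D₁ D₂ : Finset V} {x y z : V}
    (h₁ : Pth G m D₁ x z) (h₂ : Pth G n D₂ z y) (hd : ∀ u ∈ D₁, u ∈ D₂ → u = z) :
    Pth G (m + n) (D₁ ∪ D₂) x y := by
  obtain ⟨p, p1, p2, p3⟩ := h₁
  obtain ⟨q, q1, q2, q3⟩ := h₂
  refine ⟨p.append q, ?_, by simp [p2, q2], ?_⟩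
  · rw [Walk.isPath_def, Walk.support_append]
    refine List.Nodup.append p1.support_nodup (q1.support_nodup.sublist (List.tail_sublist _)) ?_
    intro u hu hu'
    have : u = z := hd u (p3 u hu) (q3 u (List.mem_of_mem_tail hu'))
    subst this
    have h := q1.support_nodup
    rw [← Walk.cons_tail_support] at h
    exact (List.nodup_cons.mp h).1 hu'
  · intro u hu
    rw [Walk.mem_support_append_iff] at hu
    rcases hu with hu | hu
    · exact Finset.mem_union_left _ (p3 u hu)
    · exact Finset.mem_union_right _ (q3 u hu)

lemma Pth.edge {G : SimpleGraph V} {x y : V} (h : G.Adj x y) : Pth G 1 {x, y} x y :=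
  ⟨Walk.cons h Walk.nil, by simp [h.ne], rfl, by simp⟩

/-- Prefixing a path by an edge. -/
lemma Pth.cons {G : SimpleGraph V} {n : ℕ} {D : Finset V} {x y z : V}
    (h : G.Adj x z) (h₂ : Pth G n D z y) (hx : x ∉ D) : Pth G (1 + n) (insert x D) x y := by
  refine ((Pth.edge h).trans h₂ ?_).mono ?_
  · intro u hu hu'
    simp only [Finset.mem_insert, Finset.mem_singleton] at hu
    rcases hu with rfl | rfl
    · exact absurd hu' hx
    · rfl
  · have := h₂.left_mem
    intro u; simp only [Finset.mem_insert, Finset.mem_union, Finset.mem_singleton]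
    grind

lemma Pth.snoc {G : SimpleGraph V} {n : ℕ} {D : Finset V} {x y z : V}
    (h₂ : Pth G n D x z) (h : G.Adj z y) (hx : y ∉ D) : Pth G (n + 1) (insert y D) x y := by
  rw [add_comm]
  exact (Pth.cons h.symm h₂.symm hx).symm

/-- Every walk inside `D` contains a path inside `D`. -/
lemma Pth.of_walk {G : SimpleGraph V} {D : Finset V} {x y : V} (p : G.Walk x y)
    (h : ∀ z ∈ p.support, z ∈ D) : ∃ n, Pth G n D x y :=
  ⟨_, p.bypass, p.bypass_isPath, rfl, fun z hz => h z (p.support_bypass_subset_support hz)⟩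

/-- `P` holds along an arithmetic progression of `k` terms with common difference one or two. -/
def AP (k : ℕ) (P : ℕ → Prop) : Prop :=
  ∃ a d, (d = 1 ∨ d = 2) ∧ ∀ i < k, P (a + d * i)

lemma AP.imp {k : ℕ} {P Q : ℕ → Prop} (h : AP k P) (hPQ : ∀ n, P n → Q n) : AP k Q := by
  obtain ⟨a, d, hd, h⟩ := h
  exact ⟨a, d, hd, fun i hi => hPQ _ (h i hi)⟩

lemma AP.shift {k c : ℕ} {P Q : ℕ → Prop} (h : AP k P) (hPQ : ∀ n, P n → Q (c + n)) : AP k Q := by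
  obtain ⟨a, d, hd, h⟩ := h
  exact ⟨c + a, d, hd, fun i hi => by rw [add_assoc]; exact hPQ _ (h i hi)⟩

lemma AP.le {k l : ℕ} {P : ℕ → Prop} (h : AP k P) (hl : l ≤ k) : AP l P := by
  obtain ⟨a, d, hd, h⟩ := h
  exact ⟨a, d, hd, fun i hi => h i (by omega)⟩

/-- The sumset of progressions with `l` and `m` terms contains one with `l + m - 1` terms: with
equal differences this is immediate, and with differences `1` and `2` the sumset is even an
interval of integers, unless the progression of difference one is a single term. -/
lemma AP.sum {l m k : ℕ} {P Q R : ℕ → Prop} (hP : AP l P) (hQ : AP m Q) (hl : 1 ≤ l) (hm : 1 ≤ m)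
    (hk : k + 1 ≤ l + m) (h : ∀ i j, P i → Q j → R (i + j)) : AP k R := by
  have key : ∀ {l m : ℕ} {P Q : ℕ → Prop} (a b : ℕ), 1 ≤ l → 1 ≤ m → k + 1 ≤ l + m →
      (∀ i j, P i → Q j → R (i + j)) → (∀ i < l, P (a + 1 * i)) → (∀ i < m, Q (b + 2 * i)) →
      AP k R := by
    intro l m P Q a b hl hm hk h hP hQ
    rcases Nat.lt_or_ge l 2 with h2 | h2
    · refine ⟨a + b, 2, Or.inr rfl, fun i hi => ?_⟩
      have := h _ _ (hP 0 (by omega)) (hQ i (by omega))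
      rwa [show a + 1 * 0 + (b + 2 * i) = a + b + 2 * i by ring] at this
    · refine ⟨a + b, 1, Or.inl rfl, fun i hi => ?_⟩
      obtain ⟨p, q, hp, hq, hpq⟩ : ∃ p q, p < l ∧ q < m ∧ p + 2 * q = i := by
        rcases Nat.lt_or_ge (i / 2) m with h3 | h3
        · exact ⟨i % 2, i / 2, by omega, h3, by omega⟩
        · exact ⟨i - 2 * (m - 1), m - 1, by omega, by omega, by omega⟩
      have := h _ _ (hP p hp) (hQ q hq)
      rwa [show a + 1 * p + (b + 2 * q) = a + b + 1 * i by omega] at this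
  have same : ∀ d a b : ℕ, (d = 1 ∨ d = 2) → (∀ i < l, P (a + d * i)) → (∀ i < m, Q (b + d * i)) →
      AP k R := by
    intro d a b hd hP hQ
    refine ⟨a + b, d, hd, fun i hi => ?_⟩
    obtain ⟨p, q, hp, hq, rfl⟩ : ∃ p q, p < l ∧ q < m ∧ p + q = i := by
      rcases Nat.lt_or_ge i l with h3 | h3
      · exact ⟨i, 0, h3, by omega, by omega⟩
      · exact ⟨l - 1, i - (l - 1), by omega, by omega, by omega⟩
    have := h _ _ (hP p hp) (hQ q hq)
    rwa [show a + d * p + (b + d * q) = a + b + d * (p + q) by ring] at this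
  obtain ⟨a, d, hd, hP⟩ := hP
  obtain ⟨b, e, he, hQ⟩ := hQ
  rcases hd with rfl | rfl <;> rcases he with rfl | rfl
  · exact same 1 a b (Or.inl rfl) hP hQ
  · exact key a b hl hm hk h hP hQ
  · exact key b a hm hl (by omega) (fun i j hi hj => by rw [add_comm]; exact h _ _ hj hi) hQ hP
  · exact same 2 a b (Or.inr rfl) hP hQ

/-- A single value is a progression with one term. -/
lemma AP.one {n : ℕ} {P : ℕ → Prop} (h : P n) : AP 1 P :=
  ⟨n, 1, Or.inl rfl, fun i hi => by obtain rfl : i = 0 := by omega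
                                    simpa using h⟩

/-- Every vertex of `D` reaches `v` inside `D ∪ {v}`, expressed by cuts: every nonempty
`E ⊆ D` has an edge to the rest of `D ∪ {v}`. -/
def Conn (G : SimpleGraph V) (D : Finset V) (v : V) : Prop :=
  ∀ E ⊆ D, E.Nonempty → ∃ e ∈ E, ∃ z, z ∉ E ∧ (z ∈ D ∨ z = v) ∧ G.Adj e z

lemma reach {G : SimpleGraph V} {D : Finset V} {u v : V} (hu : u ∈ D)
    (h : ∀ E ⊆ D, u ∈ E → ∃ e ∈ E, ∃ z, z ∉ E ∧ (z ∈ D ∨ z = v) ∧ G.Adj e z) :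
    ∃ n, Pth G n (insert v D) u v := by
  classical
  let E := D.filter fun z => ∃ p : G.Walk u z, ∀ a ∈ p.support, a ∈ D
  have huE : u ∈ E := Finset.mem_filter.mpr ⟨hu, Walk.nil, by simpa using hu⟩
  obtain ⟨e, he, z, hz, hz', ha⟩ := h E (Finset.filter_subset _ _) huE
  obtain ⟨p, hp⟩ := (Finset.mem_filter.mp he).2
  rcases hz' with hz' | rfl
  · exact absurd (Finset.mem_filter.mpr ⟨hz', p.concat ha, by
      intro a; rw [Walk.support_concat]; simp; grind⟩) hz
  · refine Pth.of_walk (p.concat ha) ?_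
    intro a; rw [Walk.support_concat]; simp; grind

lemma Conn.reach {G : SimpleGraph V} {D : Finset V} {u v : V} (h : Conn G D v) (hu : u ∈ D) :
    ∃ n, Pth G n (insert v D) u v :=
  CycMod.reach hu fun E hE hne => h E hE ⟨u, hne⟩

/-- The part of `U` that is connected to `v` through `U`. -/
lemma region (G : SimpleGraph V) (U : Finset V) (v : V) (hv : v ∉ U) :
    ∃ D ⊆ U, Conn G D v ∧ (∀ u ∈ U, G.Adj u v → u ∈ D) ∧
      (∀ u ∈ D, ∀ z ∈ U, G.Adj u z → z ∈ D) := by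
  classical
  -- remove a largest subset of `U` that sends no edge to the rest of `U ∪ {v}`
  let F := U.powerset.filter fun E => ∀ e ∈ E, ∀ z, (z ∈ U ∨ z = v) → G.Adj e z → z ∈ E
  have hF : F.Nonempty := ⟨∅, by simp [F]⟩
  obtain ⟨E, hE, hmax⟩ := F.exists_max_image Finset.card hF
  simp only [F, Finset.mem_filter, Finset.mem_powerset] at hE hmax
  refine ⟨U \ E, Finset.sdiff_subset, ?_, ?_, ?_⟩
  · intro E' hE' hne
    by_contra hcon
    push Not at hcon
    have h1 := hmax (E ∪ E') ⟨by grind, by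
      intro e he z hz ha
      by_contra hz'
      simp only [Finset.mem_union, not_or] at hz' he
      rcases he with he | he
      · exact hz'.1 (hE.2 e he z hz ha)
      · refine hcon e he z hz'.2 ?_ ha
        grind⟩
    obtain ⟨e, he⟩ := hne
    have : E ⊂ E ∪ E' := by
      refine Finset.ssubset_iff_subset_ne.mpr ⟨Finset.subset_union_left, ?_⟩
      intro h
      have : e ∈ E := by rw [h]; exact Finset.mem_union_right _ he
      have := hE' he
      grind
    have := Finset.card_lt_card this
    omega
  · intro u hu ha
    have := hE.2
    grind
  · intro u hu z hz ha
    have := hE.2 z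
    have := ha.symm
    grind

end CycMod

/-! ### Rooted instances and contraction -/

namespace CycMod

variable {V : Type*}

lemma Pth.transfer {G H : SimpleGraph V} {n : ℕ} {D : Finset V} {x y : V}
    (h : Pth G n D x y) (hG : ∀ a ∈ D, ∀ b ∈ D, G.Adj a b → H.Adj a b) : Pth H n D x y := by
  obtain ⟨p, h1, h2, h3⟩ := h
  have he : ∀ e ∈ p.edges, e ∈ H.edgeSet := by
    intro e
    induction e with
    | h a b =>
      intro hab
      exact hG a (h3 a (p.fst_mem_support_of_mem_edges hab)) b
        (h3 b (p.snd_mem_support_of_mem_edges hab)) (p.adj_of_mem_edges hab)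
  exact ⟨p.transfer H he, h1.transfer he, by simpa using h2, by simpa using h3⟩

lemma walk_support {G : SimpleGraph V} {P : V → Prop} (hP : ∀ u v, G.Adj u v → P v) {a b : V}
    (p : G.Walk a b) (ha : P a) : ∀ z ∈ p.support, P z := by
  induction p with
  | nil => simpa using ha
  | cons h q ih =>
    intro z hz
    rw [Walk.support_cons, List.mem_cons] at hz
    rcases hz with rfl | hz
    · exact ha
    · exact ih (hP _ _ h) z hz

/-- The first edge of a path of positive length. -/
lemma Pth.uncons {G : SimpleGraph V} {n : ℕ} {D : Finset V} {x y : V}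
    (h : Pth G n D x y) (hxy : x ≠ y) [DecidableEq V] :
    ∃ m z, n = 1 + m ∧ G.Adj x z ∧ Pth G m (D.erase x) z y := by
  obtain ⟨p, h1, h2, h3⟩ := h
  cases p with
  | nil => exact absurd rfl hxy
  | cons h q =>
    rw [Walk.cons_isPath_iff] at h1
    refine ⟨q.length, _, by rw [← h2, Walk.length_cons, add_comm], h, q, h1.1, rfl, ?_⟩
    intro z hz
    refine Finset.mem_erase.mpr ⟨fun h => h1.2 (h ▸ hz), h3 z ?_⟩
    simp [hz]

variable [Fintype V] [DecidableEq V]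

open Classical in
/-- The neighbourhood of a vertex, as a finite set. -/
noncomputable def nbr (G : SimpleGraph V) (u : V) : Finset V := Finset.univ.filter (G.Adj u)

@[simp] lemma mem_nbr {G : SimpleGraph V} {u z : V} : z ∈ nbr G u ↔ G.Adj u z := by
  simp [nbr]

/-- A rooted instance: a graph living on `Ω ∪ {x, y}` whose roots `x`, `y` are distinct and
nonadjacent, and which becomes 2-connected when the edge `xy` is added. The last condition is
expressed by cuts: no nonempty `E ⊆ Ω` has all its outside neighbours in a single vertex. -/
structure Inst (G : SimpleGraph V) (Ω : Finset V) (x y : V) : Prop where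
  xnot : x ∉ Ω
  ynot : y ∉ Ω
  ne : x ≠ y
  nadj : ¬ G.Adj x y
  nonempty : Ω.Nonempty
  supp : ∀ u v, G.Adj u v → u ∈ Ω ∨ u = x ∨ u = y
  conn : ∀ E ⊆ Ω, E.Nonempty → ∀ w, ∃ e ∈ E, ∃ z, z ∉ E ∧ z ≠ w ∧ G.Adj e z

lemma Inst.symm {G : SimpleGraph V} {Ω : Finset V} {x y : V} (h : Inst G Ω x y) :
    Inst G Ω y x where
  xnot := h.ynot
  ynot := h.xnot
  ne := h.ne.symm
  nadj := fun h' => h.nadj h'.symm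
  nonempty := h.nonempty
  supp := fun u v ha => by have := h.supp u v ha; tauto
  conn := h.conn

/-- `k` admissible paths from `x` to `y`: paths whose lengths form a progression of `k` terms with
difference one or two. -/
def Adm (G : SimpleGraph V) (k : ℕ) (x y : V) : Prop :=
  AP k fun n => Pth G n Finset.univ x y

lemma Adm.symm {G : SimpleGraph V} {k : ℕ} {x y : V} (h : Adm G k x y) : Adm G k y x :=
  AP.imp h fun _ h => h.symm

/-- A sub-cut of a region: if `E ⊆ D` has all its neighbours in `D ∪ {v}` outside `E` equal
to `w`, then `E` is a region attached at `w`, and `w` is linked to `v` outside `E`. -/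
lemma subreg {G : SimpleGraph V} {D E : Finset V} {v w : V} (hc : Conn G D v) (hv : v ∉ D)
    (hE : E ⊆ D) (hne : E.Nonempty)
    (hw : ∀ e ∈ E, ∀ z, z ∉ E → (z ∈ D ∨ z = v) → G.Adj e z → z = w) :
    w ∉ E ∧ (w ∈ D ∨ w = v) ∧ Conn G E w ∧
      ∃ n R, Pth G n R w v ∧ R ⊆ insert v D ∧ Disjoint R E := by
  have h0 : ∀ E' ⊆ E, E'.Nonempty → ∃ e ∈ E', ∃ z, z ∉ E' ∧ (z ∈ E ∨ z = w) ∧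
      (z ∈ D ∨ z = v) ∧ G.Adj e z := by
    intro E' hE' hne'
    obtain ⟨e, he, z, hz, hz', ha⟩ := hc E' (hE'.trans hE) hne'
    refine ⟨e, he, z, hz, ?_, hz', ha⟩
    by_cases hzE : z ∈ E
    · exact Or.inl hzE
    · exact Or.inr (hw e (hE' he) z hzE hz' ha)
  have hwE : w ∉ E ∧ (w ∈ D ∨ w = v) := by
    obtain ⟨e, he, z, hz, hz1, hz2, ha⟩ := h0 E subset_rfl hne
    obtain rfl : z = w := by tauto
    exact ⟨hz, hz2⟩
  refine ⟨hwE.1, hwE.2, ?_, ?_⟩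
  · intro E' hE' hne'
    obtain ⟨e, he, z, hz, hz1, -, ha⟩ := h0 E' hE' hne'
    exact ⟨e, he, z, hz, hz1, ha⟩
  rcases hwE.2 with hwD | rfl
  · -- a set containing `w` whose only exits lead into `E` would have no exit together with `E`
    obtain ⟨n, hn⟩ := reach (G := G) (D := D \ E) (u := w) (v := v) (by grind) (by
      intro F hF hwF
      obtain ⟨e, he, z, hz, hz', ha⟩ := hc (F ∪ E) (by grind) ⟨w, by grind⟩
      have := hw e
      exact ⟨e, by grind, z, by grind, by grind, ha⟩)
    refine ⟨n, _, hn, ?_, ?_⟩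
    · grind
    · rw [Finset.disjoint_left]; grind
  · refine ⟨0, {w}, Pth.refl G (by simp), by simp, ?_⟩
    simpa using hwE.1

/-- Contracting `T` to a single vertex `t`. -/
lemma contract {G : SimpleGraph V} {D T : Finset V} {v : V} (hT : T.Nonempty)
    (hDT : Disjoint D T) (hvD : v ∉ D) (hvT : v ∉ T) (hne : D.Nonempty) (hc : Conn G D v)
    (nobad : ∀ E ⊆ D, E.Nonempty → (∀ e ∈ E, ∀ t ∈ T, ¬ G.Adj e t) → ∀ w, ∃ e ∈ E, ∃ z, z ∉ E ∧
      (z ∈ D ∨ z = v) ∧ z ≠ w ∧ G.Adj e z) :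
    ∃ G' : SimpleGraph V, ∃ t₀, Inst G' D t₀ v ∧
      (∀ u ∈ D, (nbr G u ∩ insert v D).card ≤ (nbr G' u).card ∧
        ∀ t ∈ T, G.Adj u t → (nbr G u ∩ insert v D).card + 1 ≤ (nbr G' u).card) ∧
      ∀ n, Pth G' n Finset.univ t₀ v → ∃ t ∈ T, Pth G n (insert t (insert v D)) t v := by
  obtain ⟨t₀, ht₀⟩ := hT
  rw [Finset.disjoint_left] at hDT
  let G' : SimpleGraph V :=
    { Adj := fun a b => (a ∈ D ∧ (b ∈ D ∨ b = v) ∧ G.Adj a b) ∨ (b ∈ D ∧ a = v ∧ G.Adj a b) ∨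
        (a ∈ D ∧ b = t₀ ∧ ∃ t ∈ T, G.Adj a t) ∨ (b ∈ D ∧ a = t₀ ∧ ∃ t ∈ T, G.Adj b t)
      symm := ⟨fun a b h => by
        have := G.adj_comm a b
        grind⟩
      loopless := ⟨fun a h => by
        have := G.loopless.irrefl a
        grind⟩ }
  have hadj : ∀ a b, G'.Adj a b ↔ (a ∈ D ∧ (b ∈ D ∨ b = v) ∧ G.Adj a b) ∨
      (b ∈ D ∧ a = v ∧ G.Adj a b) ∨
        (a ∈ D ∧ b = t₀ ∧ ∃ t ∈ T, G.Adj a t) ∨ (b ∈ D ∧ a = t₀ ∧ ∃ t ∈ T, G.Adj b t) :=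
    fun a b => Iff.rfl
  have ht₀D : t₀ ∉ D := fun h => hDT h ht₀
  have ht₀v : t₀ ≠ v := fun h => hvT (h ▸ ht₀)
  refine ⟨G', t₀, ?_, ?_, ?_⟩
  · refine ⟨ht₀D, hvD, ht₀v, ?_, hne, ?_, ?_⟩
    · rw [hadj]; grind
    · intro a b; rw [hadj]; grind
    · intro E hE hne' w
      by_cases hat : ∃ e ∈ E, ∃ t ∈ T, G.Adj e t
      · by_cases hw : w = t₀
        · obtain ⟨e, he, z, hz, hz', ha⟩ := hc E hE hne'
          refine ⟨e, he, z, hz, ?_, ?_⟩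
          · grind
          · rw [hadj]; grind
        · obtain ⟨e, he, t, ht, ha⟩ := hat
          refine ⟨e, he, t₀, fun h => ht₀D (hE h), fun h => hw h.symm, ?_⟩
          rw [hadj]; grind
      · push Not at hat
        obtain ⟨e, he, z, hz, hz', hzw, ha⟩ := nobad E hE hne' hat w
        refine ⟨e, he, z, hz, hzw, ?_⟩
        rw [hadj]; grind
  · intro u hu
    have h1 : nbr G u ∩ insert v D ⊆ nbr G' u := by
      intro z
      simp only [Finset.mem_inter, mem_nbr, Finset.mem_insert, hadj]
      grind
    refine ⟨Finset.card_le_card h1, fun t ht hut => ?_⟩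
    have h2 : t₀ ∉ nbr G u ∩ insert v D := by simp [ht₀D, ht₀v]
    rw [← Finset.card_insert_of_notMem h2]
    refine Finset.card_le_card (Finset.insert_subset ?_ h1)
    rw [mem_nbr, hadj]; grind
  · intro n hn
    obtain ⟨m, z, rfl, hz, hp⟩ := hn.uncons ht₀v
    rw [hadj] at hz
    obtain ⟨hzD, t, ht, hzt⟩ : z ∈ D ∧ ∃ t ∈ T, G.Adj z t := by grind
    refine ⟨t, ht, ?_⟩
    obtain ⟨q, q1, q2, q3⟩ := hp
    have hq := walk_support (G := G') (P := fun u => u ∈ D ∨ u = v ∨ u = t₀)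
      (by intro a b; rw [hadj]; grind) q (Or.inl hzD)
    have hp' : Pth G' m (insert v D) z v := ⟨q, q1, q2, fun u hu => by
      have := hq u hu
      have := q3 u hu
      grind⟩
    refine Pth.cons hzt.symm (hp'.transfer ?_) (by grind)
    intro a ha b hb
    rw [hadj]; grind

end CycMod

/-! ### Reductions, regions and the gluing step -/

namespace CycMod

variable {V : Type*} [Fintype V] [DecidableEq V]

lemma Inst.two_le {G : SimpleGraph V} {Ω : Finset V} {x y : V} (h : Inst G Ω x y) {u : V}
    (hu : u ∈ Ω) : 2 ≤ (nbr G u).card := by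
  obtain ⟨e, he, z, hz, hzw, ha⟩ := h.conn {u} (by simpa using hu) (by simp) u
  obtain ⟨e', he', z', hz', hzw', ha'⟩ := h.conn {u} (by simpa using hu) (by simp) z
  obtain rfl := Finset.mem_singleton.mp he
  obtain rfl := Finset.mem_singleton.mp he'
  have : ({z, z'} : Finset V) ⊆ nbr G e' := by
    intro a; simp only [Finset.mem_insert, Finset.mem_singleton, mem_nbr]; grind
  have := Finset.card_le_card this
  rwa [Finset.card_pair hzw'.symm] at this

/-- Degree bookkeeping: the neighbours of `u` split into those in `A` and those in `B`. -/
lemma card_nbr_le {G : SimpleGraph V} {u : V} {A B : Finset V}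
    (h : ∀ z, G.Adj u z → z ∈ A ∨ z ∈ B) :
    (nbr G u).card ≤ (nbr G u ∩ A).card + (nbr G u ∩ B).card := by
  refine le_trans (Finset.card_le_card ?_) (Finset.card_union_le _ _)
  intro z; simp only [Finset.mem_union, Finset.mem_inter, mem_nbr]; grind

/-- Variant of `contract` for a single vertex `t`, when nothing is lost in the degrees. -/
lemma contract_one {G : SimpleGraph V} {D : Finset V} {t v : V} (htD : t ∉ D)
    (hvD : v ∉ D) (hvt : v ≠ t) (hne : D.Nonempty) (hc : Conn G D v)
    (nobad : ∀ E ⊆ D, E.Nonempty → (∀ e ∈ E, ¬ G.Adj e t) → ∀ w, ∃ e ∈ E, ∃ z, z ∉ E ∧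
      (z ∈ D ∨ z = v) ∧ z ≠ w ∧ G.Adj e z) :
    ∃ G' : SimpleGraph V, ∃ t₀, Inst G' D t₀ v ∧
      (∀ u ∈ D, (nbr G u ∩ insert t (insert v D)).card ≤ (nbr G' u).card) ∧
      ∀ n, Pth G' n Finset.univ t₀ v → Pth G n (insert t (insert v D)) t v := by
  obtain ⟨G', t₀, h1, h2, h3⟩ := contract (T := {t}) (by simp) (by simpa using htD) hvD
    (by simpa using hvt) hne hc (by simpa using nobad)
  refine ⟨G', t₀, h1, fun u hu => ?_, by simpa using h3⟩
  by_cases ha : G.Adj u t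
  · refine le_trans ?_ ((h2 u hu).2 t (by simp) ha)
    rw [← Finset.card_insert_of_notMem (a := t) (by simp [htD, hvt.symm])]
    refine Finset.card_le_card ?_
    intro z; simp only [Finset.mem_insert, Finset.mem_inter]; tauto
  · refine le_trans ?_ (h2 u hu).1
    refine Finset.card_le_card ?_
    intro z; simp only [Finset.mem_insert, Finset.mem_inter, mem_nbr]; grind

/-- Reduction at a small cut: if all outside neighbours of `F` are among `x` and one more vertex,
then `F` carries a smaller instance whose paths extend to the given one. -/
lemma cut_red {G : SimpleGraph V} {Ω F : Finset V} {x y v : V} (I : Inst G Ω x y)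
    (hF : F ⊆ Ω) (hne : F.Nonempty)
    (hN : ∀ e ∈ F, ∀ z, G.Adj e z → z ∈ F ∨ z = x ∨ z = v) :
    ∃ G' : SimpleGraph V, ∃ t₀, Inst G' F t₀ v ∧
      (∀ u ∈ F, (nbr G u).card ≤ (nbr G' u).card) ∧ ∀ k, Adm G' k t₀ v → Adm G k x y := by
  obtain ⟨hvF, hvx, hv⟩ : v ∉ F ∧ v ≠ x ∧ (v ∈ Ω ∨ v = y) := by
    obtain ⟨e, he, z, hz, hzx, ha⟩ := I.conn F hF hne x
    obtain rfl : z = v := by have := hN e he z ha; tauto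
    refine ⟨hz, hzx, ?_⟩
    have := I.supp z e ha.symm
    tauto
  have hxF : x ∉ F := fun h => I.xnot (hF h)
  obtain ⟨G', t₀, h1, h2, h3⟩ := contract_one (G := G) (t := x) (v := v) hxF hvF hvx hne
    (by
      intro E hE hne'
      obtain ⟨e, he, z, hz, hzx, ha⟩ := I.conn E (hE.trans hF) hne' x
      refine ⟨e, he, z, hz, ?_, ha⟩
      have := hN e (hE he) z ha
      tauto)
    (by
      intro E hE hne' hat w
      obtain ⟨e, he, z, hz, hzw, ha⟩ := I.conn E (hE.trans hF) hne' w
      refine ⟨e, he, z, hz, ?_, hzw, ha⟩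
      have := hN e (hE he) z ha
      have := hat e he
      grind)
  refine ⟨G', t₀, h1, fun u hu => le_trans (Finset.card_le_card ?_) (h2 u hu), ?_⟩
  · intro z hz
    have := hN u hu z (mem_nbr.mp hz)
    simp only [Finset.mem_inter, Finset.mem_insert]
    tauto
  · intro k hk
    obtain ⟨n, hn⟩ : ∃ n, Pth G n (insert y (Ω \ F)) v y := by
      rcases hv with hv | rfl
      · refine reach (by grind) ?_
        intro E hE hvE
        obtain ⟨e, he, z, hz, hzx, ha⟩ := I.conn (E ∪ F) (by grind) ⟨v, by grind⟩ x
        have h4 := hN e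
        have h5 := I.supp z e ha.symm
        refine ⟨e, ?_, z, ?_, ?_, ha⟩ <;> grind
      · exact ⟨0, Pth.refl G (by simp)⟩
    refine AP.shift (c := n) hk fun m hm => ?_
    rw [add_comm]
    refine ((h3 m hm).trans hn ?_).mono (Finset.subset_univ _)
    have := I.ynot; have := I.xnot; have := I.ne
    intro u; simp only [Finset.mem_insert, Finset.mem_sdiff]
    grind

/-- Reduction at a root with a single neighbour. -/
lemma leaf_red {G : SimpleGraph V} {Ω : Finset V} {x y x' : V} (I : Inst G Ω x y)
    (hx : ∀ u, G.Adj x u → u = x') (hne : (Ω.erase x').Nonempty) :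
    x' ∈ Ω ∧ G.Adj x x' ∧ ∃ G' : SimpleGraph V, ∃ t₀, Inst G' (Ω.erase x') t₀ y ∧
      (∀ u ∈ Ω.erase x', (nbr G u).card ≤ (nbr G' u).card) ∧
      ∀ k, Adm G' k t₀ y → Adm G k x y := by
  have hxx : x' ∈ Ω ∧ G.Adj x x' := by
    obtain ⟨e, he, z, hz, hzx, ha⟩ := I.conn Ω subset_rfl I.nonempty y
    obtain rfl : z = x := by have := I.supp z e ha.symm; tauto
    obtain rfl := hx e ha.symm
    exact ⟨he, ha.symm⟩
  have hxn := I.xnot; have hyn := I.ynot; have hxy := I.ne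
  have hxu : ∀ u ∈ Ω, u ≠ x' → ¬ G.Adj u x := fun u _ hu' ha => hu' (hx u ha.symm)
  obtain ⟨G', t₀, h1, h2, h3⟩ := contract_one (G := G) (D := Ω.erase x') (t := x') (v := y)
    (by simp) (by simp [hyn]) (fun h => hyn (h ▸ hxx.1)) hne
    (by
      intro E hE hne'
      obtain ⟨e, he, z, hz, hzx, ha⟩ := I.conn E (hE.trans (Finset.erase_subset _ _)) hne' x'
      refine ⟨e, he, z, hz, ?_, ha⟩
      have := I.supp z e ha.symm
      have := hxu e
      grind)
    (by
      intro E hE hne' hat w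
      obtain ⟨e, he, z, hz, hzw, ha⟩ := I.conn E (hE.trans (Finset.erase_subset _ _)) hne' w
      refine ⟨e, he, z, hz, ?_, hzw, ha⟩
      have := I.supp z e ha.symm
      have := hxu e
      have := hat e he
      grind)
  refine ⟨hxx.1, hxx.2, G', t₀, h1, fun u hu => le_trans (Finset.card_le_card ?_) (h2 u hu), ?_⟩
  · intro z hz
    have ha := mem_nbr.mp hz
    have := I.supp z u ha.symm
    have := hxu u
    simp only [Finset.mem_inter, Finset.mem_insert]
    grind
  · intro k hk
    refine AP.shift (c := 1) hk fun m hm => ?_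
    refine (Pth.cons hxx.2 (h3 m hm) ?_).mono (Finset.subset_univ _)
    have := hxx.2.ne
    simp only [Finset.mem_insert, Finset.mem_erase]; tauto

/-- The induction hypothesis: the path theorem for all instances with fewer than `N` vertices
besides the roots. -/
def Hyp (V : Type*) [Fintype V] [DecidableEq V] (N : ℕ) : Prop :=
  ∀ (G : SimpleGraph V) (Ω : Finset V) (x y : V) (k : ℕ), Ω.card < N → Inst G Ω x y →
    (∀ u ∈ Ω, k + 1 ≤ (nbr G u).card) → Adm G k x y

/-- The inductive situation: an instance with the degree condition, together with the path
theorem for all smaller instances. -/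
structure Ctx (G : SimpleGraph V) (Ω : Finset V) (x y : V) (k : ℕ) : Prop extends
    Inst G Ω x y where
  deg : ∀ u ∈ Ω, k + 1 ≤ (nbr G u).card
  hyp : Hyp V Ω.card

lemma Ctx.symm {G : SimpleGraph V} {Ω : Finset V} {x y : V} {k : ℕ} (C : Ctx G Ω x y k) :
    Ctx G Ω y x k := ⟨C.toInst.symm, C.deg, C.hyp⟩

/-- A proper nonempty part of the interior whose only outside neighbours are `x` and one further
vertex is a smaller instance, from which the paths extend to `y`. -/
lemma Ctx.cut {G : SimpleGraph V} {Ω : Finset V} {x y : V} {k : ℕ} (C : Ctx G Ω x y k)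
    {F : Finset V} (v : V) (hF : F ⊆ Ω) (hne : F.Nonempty) (hlt : F ≠ Ω)
    (hN : ∀ e ∈ F, ∀ z, G.Adj e z → z ∈ F ∨ z = x ∨ z = v) : Adm G k x y := by
  obtain ⟨G', t₀, h1, h2, h3⟩ := cut_red C.toInst hF hne hN
  refine h3 k (C.hyp G' F t₀ v k (Finset.card_lt_card (hF.ssubset_of_ne hlt)) h1 ?_)
  intro u hu
  exact (C.deg u (hF hu)).trans (h2 u hu)

/-- The version of `Ctx.cut` for the root `y`. -/
lemma Ctx.cut_y {G : SimpleGraph V} {Ω : Finset V} {x y : V} {k : ℕ} (C : Ctx G Ω x y k)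
    {F : Finset V} (v : V) (hF : F ⊆ Ω) (hne : F.Nonempty) (hlt : F ≠ Ω)
    (hN : ∀ e ∈ F, ∀ z, G.Adj e z → z ∈ F ∨ z = y ∨ z = v) : Adm G k x y :=
  (C.symm.cut v hF hne hlt hN).symm

/-- A root with at most one neighbour can be replaced by that neighbour. -/
lemma Ctx.leaf {G : SimpleGraph V} {Ω : Finset V} {x y : V} {k : ℕ} (C : Ctx G Ω x y k)
    (hk : 2 ≤ k) {x' : V} (hx : ∀ u, G.Adj x u → u = x') : Adm G k x y := by
  by_cases hne : (Ω.erase x').Nonempty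
  · obtain ⟨h0, -, G', t₀, h1, h2, h3⟩ := leaf_red C.toInst hx hne
    refine h3 k (C.hyp G' _ t₀ y k (Finset.card_erase_lt_of_mem h0) h1 ?_)
    intro u hu
    exact (C.deg u (Finset.mem_of_mem_erase hu)).trans (h2 u hu)
  · obtain ⟨u, hu⟩ := C.nonempty
    have h1 := C.deg u hu
    have h2 : nbr G u ⊆ {x, y} := by
      intro z hz
      have ha := mem_nbr.mp hz
      have := C.supp z u ha.symm
      have := ha.ne
      rw [Finset.not_nonempty_iff_eq_empty] at hne
      have h5 : ∀ a ∈ Ω, a = x' := by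
        intro a ha'
        by_contra hcon
        have : a ∈ Ω.erase x' := by simp [ha', hcon]
        simp [hne] at this
      have := h5 u hu
      have := h5 z
      simp only [Finset.mem_insert, Finset.mem_singleton]
      grind
    have := Finset.card_le_card h2
    have := Finset.card_le_two (a := x) (b := y)
    omega

/-- A region `D` attached at `v`, relative to a core `S`: the neighbours of `D` outside `D` lie in
`S ∪ {v}`, the set `D` is connected to `v`, and `v` is linked to `y` by a path avoiding
`S` and `D`. -/
structure Reg (G : SimpleGraph V) (Ω : Finset V) (y : V) (S D : Finset V) (v : V) : Prop where
  sub : D ⊆ Ω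
  ne : D.Nonempty
  disj : ∀ u ∈ D, u ∉ S
  vS : v ∉ S
  vD : v ∉ D
  nb : ∀ u ∈ D, ∀ z, G.Adj u z → z ∈ D ∨ z ∈ S ∨ z = v
  conn : Conn G D v
  lnk : ∃ n R, Pth G n R v y ∧ (∀ u ∈ R, u ∉ S) ∧ ∀ u ∈ R, u ∉ D

/-- A part of a region that is separated from the rest of it by `w` is a region attached at `w`. -/
lemma Reg.shrink {G : SimpleGraph V} {Ω : Finset V} {y : V} {S D E : Finset V} {v w : V}
    (R : Reg G Ω y S D v) (hE : E ⊆ D) (hne : E.Nonempty)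
    (hw : ∀ e ∈ E, ∀ z, z ∉ E → (z ∈ D ∨ z = v) → G.Adj e z → z = w) : Reg G Ω y S E w := by
  obtain ⟨h1, h2, h3, n, P, h4, h5, h6⟩ := subreg R.conn R.vD hE hne hw
  obtain ⟨m, Q, q1, q2, q3⟩ := R.lnk
  have hd := R.disj; have hvS := R.vS
  rw [Finset.disjoint_left] at h6
  refine ⟨hE.trans R.sub, hne, fun u hu => hd u (hE hu), by grind, h1, ?_, h3, n + m, P ∪ Q,
    h4.trans q1 (by grind), by grind, by grind⟩
  intro u hu z ha
  have := hw u hu z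
  have := R.nb u (hE hu) z ha
  grind

/-- The basic gluing step. Paths from `x` to all of `T` through the core `S` with `l` admissible
lengths are continued through the region `D`, contracted along `T`, to `v` and on to `y`. This
succeeds unless some part of the region has no neighbour in `T`. -/
lemma Ctx.step {G : SimpleGraph V} {Ω : Finset V} {x y : V} {k : ℕ} (C : Ctx G Ω x y k)
    {S D : Finset V} {v : V} (R : Reg G Ω y S D v) {T : Finset V} (hT : T.Nonempty) (hTS : T ⊆ S)
    (hTΩ : T ⊆ Ω) (l : ℕ) (hl : 1 ≤ l) (hAP : AP l fun n => ∀ t ∈ T, Pth G n S x t)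
    (loss : ∀ u ∈ D, (nbr G u ∩ S).card + 1 ≤ l ∨
      ((nbr G u ∩ S).card ≤ l ∧ ∃ t ∈ T, G.Adj u t)) :
    Adm G k x y ∨ ∃ E ⊆ D, ∃ w, Reg G Ω y S E w ∧ ∀ e ∈ E, ∀ t ∈ T, ¬ G.Adj e t := by
  by_contra hcon
  push Not at hcon
  obtain ⟨hA, hcon⟩ := hcon
  have hd := R.disj
  obtain ⟨G', t₀, h1, h2, h3⟩ := contract (G := G) (D := D) (T := T) (v := v) hT
    (Finset.disjoint_left.mpr fun u hu hu' => hd u hu (hTS hu')) R.vD (fun h => R.vS (hTS h)) R.ne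
    R.conn (by
      intro E hE hne hat w
      by_contra hw
      push Not at hw
      obtain ⟨e, he, t, ht, ha⟩ := hcon E hE w (R.shrink hE hne fun e he z hz hz' ha => by
        by_contra hzw
        exact hw e he z hz hz' hzw ha)
      exact hat e he t ht ha)
  have hA' : Adm G' (max 1 (k + 1 - l)) t₀ v := by
    refine C.hyp _ _ _ _ _ (Finset.card_lt_card (R.sub.ssubset_of_ne ?_)) h1 ?_
    · rintro rfl
      obtain ⟨t, ht⟩ := hT
      exact hd t (hTΩ ht) (hTS ht)
    · intro u hu
      have h4 := h1.two_le hu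
      have h5 := C.deg u (R.sub hu)
      have h6 := card_nbr_le (G := G) (u := u) (A := insert v D) (B := S) (by
        intro z ha
        have := R.nb u hu z ha
        simp only [Finset.mem_insert]; tauto)
      have h7 := h2 u hu
      rcases loss u hu with h8 | ⟨h8, t, ht, ha⟩
      · omega
      · have := h7.2 t ht ha
        omega
  obtain ⟨n, Q, q1, q2, q3⟩ := R.lnk
  refine hA (AP.shift (c := n) (AP.sum (k := k) (R := fun n => Pth G n (S ∪ insert v D) x v)
    hAP (AP.imp hA' h3) hl (le_max_left _ _) (by omega) ?_) ?_)
  · rintro i j hi ⟨t, ht, hj⟩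
    refine ((hi t ht).trans hj ?_).mono ?_
    · have := R.vS; grind
    · have := hTS ht; grind
  · intro m hm
    rw [add_comm]
    exact (hm.trans q1 (by grind)).mono (Finset.subset_univ _)

/-- A region whose only neighbour in the core is `x`. -/
lemma Ctx.reg_cut {G : SimpleGraph V} {Ω : Finset V} {x y : V} {k : ℕ} (C : Ctx G Ω x y k)
    {S D : Finset V} {v : V} (R : Reg G Ω y S D v) (hS : ∃ s ∈ S, s ∈ Ω)
    (hN : ∀ e ∈ D, ∀ s ∈ S, G.Adj e s → s = x) : Adm G k x y := by
  refine C.cut v R.sub R.ne ?_ ?_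
  · rintro rfl
    obtain ⟨s, hs, hs'⟩ := hS
    exact R.disj s hs' hs
  · intro e he z ha
    have := R.nb e he z ha
    have := hN e he z
    tauto

/-- The region of `y` outside a core containing `x`. -/
lemma Ctx.reg_init {G : SimpleGraph V} {Ω : Finset V} {x y : V} {k : ℕ} (C : Ctx G Ω x y k)
    {S : Finset V} (hx : x ∈ S) (hyS : y ∉ S) (hy : ∃ u, G.Adj y u ∧ u ∉ S) :
    ∃ D, Reg G Ω y S D y := by
  have hyΩ := C.ynot
  obtain ⟨D, hD, h1, h2, h3⟩ := region G (Ω \ S) y (by simp [hyΩ])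
  obtain ⟨u, hu, huS⟩ := hy
  have huΩ : u ∈ Ω := by
    have := C.supp u y hu.symm
    have := hu.ne
    grind
  refine ⟨D, by grind, ⟨u, h2 u (by grind) hu.symm⟩, by grind, hyS, by grind, ?_, h1, 0, {y},
    Pth.refl G (by simp), by simpa using hyS, by grind⟩
  intro a ha z haz
  have := C.supp z a haz.symm
  have := h3 a ha z
  grind

end CycMod

/-! ### Two admissible paths with one exceptional vertex -/

namespace CycMod

variable {V : Type*} [Fintype V] [DecidableEq V]

/-- Either `T` is linked to `y` outside the core `S`, or `S \ T` separates `T` from `y`. -/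
lemma lnk_or_sep {G : SimpleGraph V} {Ω : Finset V} {x y : V} (I : Inst G Ω x y) {S T : Finset V}
    (hx : x ∈ S) (hTS : T ⊆ S) (hTΩ : T ⊆ Ω) :
    (∃ t ∈ T, ∃ n, Pth G n (insert t (insert y (Ω \ S))) t y) ∨
      ∃ F, T ⊆ F ∧ F ⊆ Ω ∧ (∀ u ∈ F, u ∉ S \ T) ∧
        ∀ e ∈ F, ∀ z, G.Adj e z → z ∈ F ∨ z ∈ S \ T := by
  have hyΩ := I.ynot
  obtain ⟨D, hD, h1, h2, h3⟩ := region G (Ω \ S) y (by simp [hyΩ])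
  by_cases hat : ∃ t ∈ T, G.Adj t y
  · obtain ⟨t, ht, ha⟩ := hat
    refine Or.inl ⟨t, ht, 1, (Pth.edge ha).mono ?_⟩
    grind
  by_cases hat' : ∃ t ∈ T, ∃ d ∈ D, G.Adj t d
  · obtain ⟨t, ht, d, hd, ha⟩ := hat'
    obtain ⟨n, hn⟩ := h1.reach hd
    refine Or.inl ⟨t, ht, 1 + n, (Pth.cons ha hn ?_).mono ?_⟩
    · grind
    · grind
  push Not at hat hat'
  refine Or.inr ⟨(Ω \ D) \ (S \ T), ?_, ?_, ?_, ?_⟩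
  · grind
  · grind
  · grind
  · intro e he z ha
    have h4 := I.supp z e ha.symm
    have h5 := h2 e
    have h6 := h3 z
    have h7 := ha.symm
    by_cases heT : e ∈ T
    · have := hat e heT
      have := hat' e heT z
      grind
    · grind

/-- The situation of the induction proving `two_paths`: every vertex of `Ω` except possibly `z` has
degree at least three. -/
structure Ctx2 (G : SimpleGraph V) (Ω : Finset V) (x y z : V) : Prop extends Inst G Ω x y where
  deg : ∀ u ∈ Ω, u ≠ z → 3 ≤ (nbr G u).card
  big : ∃ u ∈ Ω, u ≠ z
  hyp : ∀ (G' : SimpleGraph V) (Ω' : Finset V) (x y z : V), Ω'.card < Ω.card → Inst G' Ω' x y →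
    (∀ u ∈ Ω', u ≠ z → 3 ≤ (nbr G' u).card) → (∃ u ∈ Ω', u ≠ z) → Adm G' 2 x y

section two

variable {G : SimpleGraph V} {Ω : Finset V} {x y z : V}

lemma Ctx2.symm (C : Ctx2 G Ω x y z) : Ctx2 G Ω y x z :=
  ⟨C.toInst.symm, C.deg, C.big, C.hyp⟩

lemma Ctx2.cut (C : Ctx2 G Ω x y z)
    {F : Finset V} (v : V) (hF : F ⊆ Ω) (hne : ∃ u ∈ F, u ≠ z) (hlt : F ≠ Ω)
    (hN : ∀ e ∈ F, ∀ z, G.Adj e z → z ∈ F ∨ z = x ∨ z = v) : Adm G 2 x y := by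
  obtain ⟨u, hu, huz⟩ := hne
  obtain ⟨G', t₀, h1, h2, h3⟩ := cut_red C.toInst hF ⟨u, hu⟩ hN
  refine h3 _ (C.hyp G' F t₀ v z (Finset.card_lt_card (hF.ssubset_of_ne hlt)) h1 ?_ ⟨u, hu, huz⟩)
  intro u hu huz
  exact (C.deg u (hF hu) huz).trans (h2 u hu)

/-- A vertex of degree at least three has as neighbours the only three candidates. -/
lemma adj_of_three {u a b c : V} (h : 3 ≤ (nbr G u).card)
    (hN : ∀ w, G.Adj u w → w = a ∨ w = b ∨ w = c) : G.Adj u a ∧ G.Adj u b ∧ G.Adj u c := by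
  have h1 : nbr G u ⊆ {a, b, c} := by
    intro w hw
    simpa using hN w (mem_nbr.mp hw)
  have h2 := Finset.eq_of_subset_of_card_le h1 (Finset.card_le_three.trans h)
  simp [← mem_nbr, h2]

lemma Ctx2.leaf (C : Ctx2 G Ω x y z) {x' : V} (hx : ∀ u, G.Adj x u → u = x') :
    Adm G 2 x y := by
  by_cases hne : ∃ u ∈ Ω.erase x', u ≠ z
  · obtain ⟨u, hu, huz⟩ := hne
    obtain ⟨h0, -, G', t₀, h1, h2, h3⟩ := leaf_red C.toInst hx ⟨u, hu⟩
    refine h3 _ (C.hyp G' _ t₀ y z (Finset.card_erase_lt_of_mem h0) h1 ?_ ⟨u, hu, huz⟩)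
    intro u hu huz
    exact (C.deg u (Finset.mem_of_mem_erase hu) huz).trans (h2 u hu)
  · push Not at hne
    obtain ⟨u, hu, huz⟩ := C.big
    obtain rfl : u = x' := by
      by_contra h
      exact huz (hne u (by simp [h, hu]))
    obtain ⟨h1, h2, h3⟩ := adj_of_three (G := G) (u := u) (a := x) (b := y) (c := z)
      (C.deg u hu huz) (by
        intro w hw
        have := C.supp w u hw.symm
        have := hne w
        have := hw.ne
        grind)
    have hxy := C.ne; have hxn := C.xnot; have hyn := C.ynot
    have hzx : z ≠ x := by
      rintro rfl
      have := Finset.card_le_card (s := nbr G u) (t := {z, y}) (by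
        intro w hw
        have hw := mem_nbr.mp hw
        have := C.supp w u hw.symm
        have := hne w
        have := hw.ne
        simp only [Finset.mem_insert, Finset.mem_singleton]
        grind)
      have := C.deg u hu huz
      have := Finset.card_le_two (a := z) (b := y)
      omega
    have hzy : z ≠ y := by
      rintro rfl
      have := Finset.card_le_card (s := nbr G u) (t := {x, z}) (by
        intro w hw
        have hw := mem_nbr.mp hw
        have := C.supp w u hw.symm
        have := hne w
        have := hw.ne
        simp only [Finset.mem_insert, Finset.mem_singleton]
        grind)
      have := C.deg u hu huz
      have := Finset.card_le_two (a := x) (b := z)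
      omega
    have hz : z ∈ Ω := by
      have := C.supp z u h3.symm
      tauto
    have hza : G.Adj z y := by
      obtain ⟨e, he, w, hw, hwu, ha⟩ := C.conn {z} (by simpa using hz) (by simp) u
      obtain rfl := Finset.mem_singleton.mp he
      have h4 := C.supp w e ha.symm
      have h5 := hne w
      have h6 : w ≠ x := by
        rintro rfl
        exact huz (hx e ha.symm).symm
      have : w = y := by grind
      exact this ▸ ha
    refine ⟨2, 1, Or.inl rfl, fun i hi => ?_⟩
    interval_cases i
    · refine (Pth.cons h1.symm (Pth.edge h2) ?_).mono (Finset.subset_univ _)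
      simp; grind
    · refine (Pth.cons h1.symm (Pth.cons h3 (Pth.edge hza) ?_) ?_).mono (Finset.subset_univ _) <;>
        (simp; grind)

/-- The exceptional vertex may be assumed not to have degree two and `x` as a neighbour. -/
lemma Ctx2.nb2 (C : Ctx2 G Ω x y z) (hz : z ∈ Ω) {v : V}
    (hv : ∀ u, G.Adj z u → u = x ∨ u = v) : Adm G 2 x y := by
  by_contra hA
  have hxy := C.ne; have hxn := C.xnot; have hyn := C.ynot
  have hzv : G.Adj z v ∧ v ≠ x := by
    obtain ⟨e, he, w, hw, hwu, ha⟩ := C.conn {z} (by simpa using hz) (by simp) x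
    obtain rfl := Finset.mem_singleton.mp he
    obtain rfl : w = v := by have := hv w ha; tauto
    exact ⟨ha, hwu⟩
  have hzx : G.Adj z x := by
    obtain ⟨e, he, w, hw, hwu, ha⟩ := C.conn {z} (by simpa using hz) (by simp) v
    obtain rfl := Finset.mem_singleton.mp he
    obtain rfl : w = x := by have := hv w ha; tauto
    exact ha
  have hzz := hzv.1.ne
  have hne : (Ω.erase z).Nonempty := by
    obtain ⟨u, hu, huz⟩ := C.big
    exact ⟨u, by simp [hu, huz]⟩
  obtain ⟨G', t₀, h1, h2, h3⟩ := contract_one (G := G) (D := Ω.erase z) (t := x) (v := y)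
    (by simp [hxn]) (by simp [hyn]) hxy.symm hne
    (by
      intro E hE hne'
      have hzE : z ∉ E := fun h => by simpa using hE h
      have hEΩ : E ⊆ Ω := hE.trans (Finset.erase_subset _ _)
      by_cases hvE : v ∈ E
      · obtain ⟨e, he, w, hw, hwx, ha⟩ := C.conn (insert z E) (by grind) (by simp) x
        have h4 := C.supp w e ha.symm
        have h5 := hv w
        refine ⟨e, ?_, w, ?_, ?_, ha⟩ <;> grind
      · obtain ⟨e, he, w, hw, hwx, ha⟩ := C.conn E hEΩ hne' x
        have h4 := C.supp w e ha.symm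
        have h5 := hv e
        have := ha.symm
        refine ⟨e, ?_, w, ?_, ?_, ha⟩ <;> grind)
    (by
      intro E hE hne' hat w
      have hzE : z ∉ E := fun h => by simpa using hE h
      have hEΩ : E ⊆ Ω := hE.trans (Finset.erase_subset _ _)
      by_cases hvE : v ∈ E
      · by_contra hcon
        push Not at hcon
        by_cases hF : insert z E = Ω
        · refine hA (C.leaf (x' := z) fun u hu => ?_)
          have h4 := C.supp u x hu.symm
          have h5 := hat u
          have := hu.symm
          have := C.nadj
          have := hu.ne
          by_contra hcon'
          rw [← hF] at h4
          have : u ∈ E := by grind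
          grind
        · refine hA (C.cut (F := insert z E) w (by grind) ⟨v, by grind⟩ hF ?_)
          intro e he u ha
          have h4 := C.supp u e ha.symm
          have h5 := hv u
          have h6 := hcon e
          have h7 := hat e
          grind
      · obtain ⟨e, he, u, hu, huw, ha⟩ := C.conn E hEΩ hne' w
        have h4 := C.supp u e ha.symm
        have h5 := hv e
        have := ha.symm
        have := hat e
        refine ⟨e, ?_, u, ?_, ?_, ?_, ha⟩ <;> grind)
  by_cases hbig : ∃ u ∈ Ω.erase z, u ≠ v
  · refine hA (AP.imp (C.hyp G' _ t₀ y v (Finset.card_erase_lt_of_mem hz) h1 ?_ hbig)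
      fun n hn => (h3 n hn).mono (Finset.subset_univ _))
    intro u hu huv
    refine ((C.deg u (Finset.mem_of_mem_erase hu) (Finset.ne_of_mem_erase hu)).trans
      (Finset.card_le_card ?_)).trans (h2 u hu)
    intro w hw
    have ha := mem_nbr.mp hw
    have h4 := C.supp w u ha.symm
    have h5 := hv u
    have := ha.symm
    simp only [Finset.mem_inter, Finset.mem_insert]
    grind
  · push Not at hbig
    obtain ⟨u, hu, huz⟩ := C.big
    obtain rfl : u = v := hbig u (by simp [hu, huz])
    obtain ⟨h4, h5, h6⟩ := adj_of_three (G := G) (u := u) (a := x) (b := y) (c := z)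
      (C.deg u hu huz) (by
        intro w hw
        have := C.supp w u hw.symm
        have := hbig w
        have := hw.ne
        grind)
    refine hA ⟨2, 1, Or.inl rfl, fun i hi => ?_⟩
    interval_cases i
    · refine (Pth.cons h4.symm (Pth.edge h5) ?_).mono (Finset.subset_univ _)
      simp; grind
    · refine (Pth.cons hzx.symm (Pth.cons h6.symm (Pth.edge h5) ?_) ?_).mono
        (Finset.subset_univ _) <;> (simp; grind)

/-- With a triangle `x, p, q`, a path from `p` to `y` avoiding `x, q` can be prefixed by `x p` or by
`x q p`; these have lengths differing by one. -/
lemma Ctx2.triangle (C : Ctx2 G Ω x y z) {p q : V} (hp : p ∈ Ω) (hq : q ∈ Ω)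
    (hxp : G.Adj x p) (hxq : G.Adj x q) (hpq : G.Adj p q) : Adm G 2 x y := by
  have hxy := C.ne; have hxn := C.xnot; have hyn := C.ynot
  have key : ∀ p q, p ∈ Ω → q ∈ Ω → G.Adj x p → G.Adj x q → G.Adj p q →
      ∀ n, Pth G n (insert p (insert y (Ω \ {x, p, q}))) p y → Adm G 2 x y := by
    intro p q hp hq hxp hxq hpq n hn
    have := hxp.ne; have := hxq.ne; have := hpq.ne
    refine ⟨1 + n, 1, Or.inl rfl, fun i hi => ?_⟩
    interval_cases i
    · exact (Pth.cons hxp hn (by grind)).mono (Finset.subset_univ _)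
    · have := (Pth.cons hxq (Pth.cons hpq.symm hn (by grind)) (by grind)).mono
        (Finset.subset_univ _)
      rwa [show 1 + n + 1 * 1 = 1 + (1 + n) by ring]
  have := hxp.ne; have := hxq.ne
  rcases lnk_or_sep C.toInst (S := {x, p, q}) (T := {p, q}) (by simp) (by grind) (by grind) with ⟨t, ht, n, hn⟩ | ⟨F, h1, h2, h3, h4⟩
  · simp only [Finset.mem_insert, Finset.mem_singleton] at ht
    rcases ht with rfl | rfl
    · exact key t q hp hq hxp hxq hpq n hn
    · refine key t p hq hp hxq hxp hpq.symm n ?_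
      rwa [show ({x, t, p} : Finset V) = {x, p, t} by grind]
  · obtain ⟨e, he, w, hw, hwx, ha⟩ := C.conn F h2 ⟨p, by grind⟩ x
    have := h4 e he w ha
    grind

/-- With a 4-cycle `x, b, a, c`, a path from `b` to `y` avoiding the others can be prefixed by `x b`
or by `x c a b`; these have lengths differing by two. -/
lemma Ctx2.square (C : Ctx2 G Ω x y z) {a b c : V} (ha : a ∈ Ω) (hb : b ∈ Ω) (hc : c ∈ Ω)
    (hbc : b ≠ c) (hxb : G.Adj x b) (hxc : G.Adj x c) (hab : G.Adj a b) (hac : G.Adj a c) :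
    Adm G 2 x y := by
  have hxy := C.ne; have hxn := C.xnot; have hyn := C.ynot
  have key : ∀ b c, b ∈ Ω → c ∈ Ω → b ≠ c → G.Adj x b → G.Adj x c → G.Adj a b → G.Adj a c →
      ∀ n, Pth G n (insert b (insert y (Ω \ {x, a, b, c}))) b y → Adm G 2 x y := by
    intro b c hb hc hbc hxb hxc hab hac n hn
    have := hxb.ne; have := hxc.ne; have := hab.ne; have := hac.ne
    refine ⟨1 + n, 2, Or.inr rfl, fun i hi => ?_⟩
    interval_cases i
    · exact (Pth.cons hxb hn (by grind)).mono (Finset.subset_univ _)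
    · have := (Pth.cons hxc (Pth.cons hac.symm (Pth.cons hab hn (by grind)) (by grind))
        (by grind)).mono (Finset.subset_univ _)
      rwa [show 1 + n + 2 * 1 = 1 + (1 + (1 + n)) by ring]
  have := hxb.ne; have := hxc.ne; have := hab.ne; have := hac.ne
  rcases lnk_or_sep C.toInst (S := {x, a, b, c}) (T := {b, c}) (by simp) (by grind) (by grind) with ⟨t, ht, n, hn⟩ | ⟨F, h1, h2, h3, h4⟩
  · simp only [Finset.mem_insert, Finset.mem_singleton] at ht
    rcases ht with rfl | rfl
    · exact key t c hb hc hbc hxb hxc hab hac n hn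
    · refine key t b hc hb hbc.symm hxc hxb hac hab n ?_
      rwa [show ({x, a, t, b} : Finset V) = {x, a, b, t} by grind]
  · refine C.cut a h2 ?_ ?_ ?_
    · by_cases hbz : b = z
      · exact ⟨c, by grind⟩
      · exact ⟨b, by grind⟩
    · rintro rfl
      have := h3 a ha
      grind
    · intro e he w haw
      have := h4 e he w haw
      grind

/-- Without triangles and four-cycles at `x`, contracting the neighbourhood of `x` preserves
degrees; this applies when `y` has a neighbour that is not a neighbour of `x`. -/
lemma Ctx2.spread (C : Ctx2 G Ω x y z)
    (h4 : ∀ a ∈ Ω, ∀ b c, G.Adj x b → G.Adj x c → G.Adj a b → G.Adj a c → b = c)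
    {u : V} (hyu : G.Adj y u) (hxu : ¬ G.Adj x u) : Adm G 2 x y := by
  have hxy := C.ne; have hxn := C.xnot; have hyn := C.ynot; have hna := C.nadj
  have hNΩ : ∀ w, G.Adj x w → w ∈ Ω := by
    intro w hw
    have := C.supp w x hw.symm
    have := hw.ne
    grind
  obtain ⟨D, hD, d1, d2, d3⟩ := region G (Ω \ nbr G x) y (by simp [hyn])
  have huD : u ∈ D := by
    refine d2 u ?_ hyu.symm
    have := C.supp u y hyu.symm
    have := hyu.ne
    have := hyu.symm
    simp only [Finset.mem_sdiff, mem_nbr]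
    grind
  have hDm : ∀ a ∈ D, a ∈ Ω ∧ ¬ G.Adj x a := fun a ha => by simpa using hD ha
  have hDn : ∀ a ∈ D, ∀ w, G.Adj a w → w ∈ D ∨ w = y ∨ w ∈ nbr G x := by
    intro a ha w haw
    have := C.supp w a haw.symm
    have := d3 a ha w
    have := hDm a ha
    have := haw.symm
    simp only [Finset.mem_sdiff, mem_nbr] at *
    grind
  obtain ⟨n0, hn0⟩ : (nbr G x).Nonempty := by
    obtain ⟨e, he, w, hw, hwy, ha⟩ := C.conn Ω subset_rfl C.nonempty y
    have := C.supp w e ha.symm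
    obtain rfl : w = x := by tauto
    exact ⟨e, mem_nbr.mpr ha.symm⟩
  have hone : ∀ a ∈ D, (nbr G a ∩ nbr G x).card ≤ 1 := by
    intro a ha
    rw [Finset.card_le_one]
    intro b hb c hc
    simp only [Finset.mem_inter, mem_nbr] at hb hc
    exact h4 a (hDm a ha).1 b c hb.2 hc.2 hb.1 hc.1
  by_cases hbig : ∃ a ∈ D, a ≠ z
  · obtain ⟨G', t₀, g1, g2, g3⟩ := contract (G := G) (D := D) (T := nbr G x) (v := y) ⟨n0, hn0⟩
      (by rw [Finset.disjoint_left]; intro a ha; simpa using (hDm a ha).2)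
      (fun h => hyn (hDm y h).1) (by simpa using hna) ⟨u, huD⟩ d1 (by
        intro E hE hne hat w
        obtain ⟨e, he, u, hu, huw, ha⟩ := C.conn E (fun a ha => (hDm a (hE ha)).1) hne w
        refine ⟨e, he, u, hu, ?_, huw, ha⟩
        have := hDn e (hE he) u ha
        have := hat e he u
        tauto)
    refine AP.shift (c := 1) (C.hyp G' D t₀ y z (Finset.card_lt_card
      (Finset.ssubset_iff_subset_ne.mpr ⟨fun a ha => (hDm a ha).1, ?_⟩)) g1 ?_ hbig) ?_
    · rintro rfl
      exact (hDm n0 (hNΩ n0 (mem_nbr.mp hn0))).2 (mem_nbr.mp hn0)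
    · intro a ha haz
      have g4 := C.deg a (hDm a ha).1 haz
      have g5 := card_nbr_le (G := G) (u := a) (A := insert y D) (B := nbr G x) (by
        intro w haw
        have := hDn a ha w haw
        simp only [Finset.mem_insert]; tauto)
      have g6 := hone a ha
      have g7 := g2 a ha
      rcases Finset.eq_empty_or_nonempty (nbr G a ∩ nbr G x) with h0 | ⟨t, ht⟩
      · rw [h0, Finset.card_empty] at g5
        omega
      · simp only [Finset.mem_inter] at ht
        have := g7.2 t ht.2 (mem_nbr.mp ht.1)
        omega
    · intro m hm
      obtain ⟨t, ht, hm⟩ := g3 m hm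
      refine (Pth.cons (mem_nbr.mp ht) hm ?_).mono (Finset.subset_univ _)
      have := (mem_nbr.mp ht).ne
      have := hDm x
      grind
  · push Not at hbig
    obtain rfl := hbig u huD
    -- now `u = z`, and its neighbours are `y` and at most one neighbour of `x`
    obtain ⟨v, hv⟩ : ∃ v, ∀ w ∈ nbr G u ∩ nbr G x, w = v := by
      rcases Finset.eq_empty_or_nonempty (nbr G u ∩ nbr G x) with h0 | ⟨t, ht⟩
      · exact ⟨u, by simp [h0]⟩
      · exact ⟨t, fun w hw => Finset.card_le_one.mp (hone u huD) w hw t ht⟩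
    refine (C.symm.nb2 (v := v) (hDm u huD).1 ?_).symm
    intro w hw
    have h5 := hDn u huD w hw
    have h6 := hbig w
    have h7 := hw.ne
    have h8 := hv w
    simp only [Finset.mem_inter, mem_nbr] at h5 h8
    grind

/-- The case of two roots with the same neighbourhood, when `x` lies on no triangle and no
4-cycle. -/
lemma Ctx2.twin (C : Ctx2 G Ω x y z)
    (h3 : ∀ p q, G.Adj x p → G.Adj x q → ¬ G.Adj p q)
    (h4 : ∀ a ∈ Ω, ∀ b c, G.Adj x b → G.Adj x c → G.Adj a b → G.Adj a c → b = c)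
    (hxy' : ∀ u, G.Adj x u ↔ G.Adj y u) : Adm G 2 x y := by
  have hxy := C.ne; have hxn := C.xnot; have hyn := C.ynot; have hna := C.nadj
  have hNΩ : ∀ w, G.Adj x w → w ∈ Ω := by
    intro w hw
    have := C.supp w x hw.symm
    have := hw.ne
    grind
  by_cases hp : ∃ p, G.Adj x p ∧ p ≠ z
  swap
  · push Not at hp
    exact C.leaf hp
  obtain ⟨p, hxp, hpz⟩ := hp
  by_cases hleaf : ∃ t, G.Adj x t ∧ t ≠ p
  swap
  · push Not at hleaf
    exact C.leaf hleaf
  obtain ⟨t1, hxt1, ht1p⟩ := hleaf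
  obtain ⟨D, hD, d1, d2, d3⟩ := region G (Ω \ nbr G x) p (by simp [hxp])
  have hDm : ∀ a ∈ D, a ∈ Ω ∧ ¬ G.Adj x a := fun a ha => by simpa using hD ha
  have hDn : ∀ a ∈ D, ∀ w, G.Adj a w → w ∈ D ∨ w ∈ nbr G x := by
    intro a ha w haw
    have := C.supp w a haw.symm
    have := d3 a ha w
    have := hDm a ha
    have := hxy' a
    have := haw.symm
    simp only [Finset.mem_sdiff, mem_nbr] at *
    grind
  have hDne : D.Nonempty := by
    by_contra hcon
    have h5 := C.deg p (hNΩ p hxp) hpz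
    have h6 : nbr G p ⊆ {x, y} := by
      intro w hw
      have hw := mem_nbr.mp hw
      have := C.supp w p hw.symm
      have := h3 p w hxp
      have := d2 w
      have := hw.symm
      rw [Finset.not_nonempty_iff_eq_empty] at hcon
      subst hcon
      simp only [Finset.mem_insert, Finset.mem_singleton, Finset.mem_sdiff, mem_nbr,
        Finset.notMem_empty] at *
      grind
    have := Finset.card_le_card h6
    have := Finset.card_le_two (a := x) (b := y)
    omega
  have hone : ∀ a ∈ D, (nbr G a ∩ nbr G x).card ≤ 1 := by
    intro a ha
    rw [Finset.card_le_one]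
    intro b hb c hc
    simp only [Finset.mem_inter, mem_nbr] at hb hc
    exact h4 a (hDm a ha).1 b c hb.2 hc.2 hb.1 hc.1
  have hbig : ∃ a ∈ D, a ≠ z := by
    by_contra hcon
    push Not at hcon
    obtain ⟨d, hd⟩ := hDne
    obtain rfl := hcon d hd
    have h5 := C.toInst.two_le (hDm d hd).1
    have h6 := hone d hd
    rw [Finset.inter_eq_left.mpr] at h6
    · omega
    · intro w hw
      have hw := mem_nbr.mp hw
      have := hDn d hd w hw
      have := hcon w
      have := hw.ne
      grind
  obtain ⟨G', t₀, g1, g2, g3⟩ := contract (G := G) (D := D) (T := (nbr G x).erase p) (v := p)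
    ⟨t1, by simp [hxt1, ht1p]⟩
    (by rw [Finset.disjoint_left]; intro a ha; simpa using fun _ => (hDm a ha).2)
    (fun h => (hDm p h).2 hxp) (by simp) hDne d1 (by
      intro E hE hne hat w
      obtain ⟨e, he, u, hu, huw, ha⟩ := C.conn E (fun a ha => (hDm a (hE ha)).1) hne w
      refine ⟨e, he, u, hu, ?_, huw, ha⟩
      have := hDn e (hE he) u ha
      have := hat e he u
      simp only [Finset.mem_erase, mem_nbr] at *
      tauto)
  refine AP.shift (c := 2) (C.hyp G' D t₀ p z (Finset.card_lt_card
    (Finset.ssubset_iff_subset_ne.mpr ⟨fun a ha => (hDm a ha).1, ?_⟩)) g1 ?_ hbig) ?_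
  · rintro rfl
    exact (hDm p (hNΩ p hxp)).2 hxp
  · intro a ha haz
    have g4 := C.deg a (hDm a ha).1 haz
    have g5 := card_nbr_le (G := G) (u := a) (A := insert p D) (B := (nbr G x).erase p) (by
      intro w haw
      have := hDn a ha w haw
      simp only [Finset.mem_insert, Finset.mem_erase]; tauto)
    have g6 : (nbr G a ∩ (nbr G x).erase p).card ≤ 1 :=
      (Finset.card_le_card (by grind)).trans (hone a ha)
    have g7 := g2 a ha
    rcases Finset.eq_empty_or_nonempty (nbr G a ∩ (nbr G x).erase p) with h0 | ⟨t, ht⟩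
    · rw [h0, Finset.card_empty] at g5
      omega
    · simp only [Finset.mem_inter] at ht
      have := g7.2 t ht.2 (mem_nbr.mp ht.1)
      omega
  · intro m hm
    obtain ⟨t, ht, hm⟩ := g3 m hm
    simp only [Finset.mem_erase, mem_nbr] at ht
    rw [show 2 + m = 1 + (m + 1) by ring]
    have := hDm x
    have := hDm y
    have := hxp.ne
    have := ht.2.ne
    have h7 := (hxy' p).mp hxp
    have h8 := (hxy' t).mp ht.2
    have := h7.ne
    have := h8.ne
    refine (Pth.cons ht.2 (hm.snoc h7.symm ?_) ?_).mono (Finset.subset_univ _)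
    · grind
    · grind

end two

/-- Two admissible paths exist as soon as all vertices of `Ω` but one have degree at least
three. -/
lemma two_paths : ∀ (N : ℕ) (G : SimpleGraph V) (Ω : Finset V) (x y z : V), Ω.card = N →
    Inst G Ω x y → (∀ u ∈ Ω, u ≠ z → 3 ≤ (nbr G u).card) → (∃ u ∈ Ω, u ≠ z) → Adm G 2 x y := by
  intro N
  induction N using Nat.strong_induction_on with
  | _ N ih =>
  intro G Ω x y z hN I hdeg hbig
  have C : Ctx2 G Ω x y z := ⟨I, hdeg, hbig, fun G' Ω' x y z h I hd hb =>
    ih _ (hN ▸ h) G' Ω' x y z rfl I hd hb⟩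
  by_contra hA
  have key : ∀ x y, Ctx2 G Ω x y z → ¬ Adm G 2 x y →
      (∀ w, G.Adj x w → w ∈ Ω) ∧ (∀ p q, G.Adj x p → G.Adj x q → ¬ G.Adj p q) ∧
      (∀ a ∈ Ω, ∀ b c, G.Adj x b → G.Adj x c → G.Adj a b → G.Adj a c → b = c) ∧
      ∀ u, G.Adj y u → G.Adj x u := by
    intro x y C hA
    have hNΩ : ∀ w, G.Adj x w → w ∈ Ω := by
      intro w hw
      have := C.supp w x hw.symm
      have := hw.ne
      have := C.nadj
      grind
    have h4 : ∀ a ∈ Ω, ∀ b c, G.Adj x b → G.Adj x c → G.Adj a b → G.Adj a c → b = c := by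
      intro a ha b c hb hc hab hac
      by_contra hbc
      exact hA (C.square ha (hNΩ b hb) (hNΩ c hc) hbc hb hc hab hac)
    refine ⟨hNΩ, fun p q hp hq hpq => hA (C.triangle (hNΩ p hp) (hNΩ q hq) hp hq hpq), h4, ?_⟩
    intro u hu
    by_contra hcon
    exact hA (C.spread h4 hu hcon)
  obtain ⟨-, h3, h4, h5⟩ := key x y C hA
  obtain ⟨-, -, -, h6⟩ := key y x C.symm fun h => hA h.symm
  exact hA (C.twin h3 h4 fun u => ⟨h6 u, h5 u⟩)

end CycMod

/-! ### Cliques at a root: triangles and books -/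

namespace CycMod

variable {V : Type*} [Fintype V] [DecidableEq V]

/-- `S` spans a complete subgraph. -/
def Clq (G : SimpleGraph V) (S : Finset V) : Prop := ∀ a ∈ S, ∀ b ∈ S, a ≠ b → G.Adj a b

lemma Clq.mono {G : SimpleGraph V} {S T : Finset V} (h : Clq G S) (hT : T ⊆ S) : Clq G T :=
  fun a ha b hb => h a (hT ha) b (hT hb)

lemma Clq.path {G : SimpleGraph V} : ∀ (n : ℕ) {S : Finset V} {x t : V}, Clq G S → x ∈ S → t ∈ S →
    x ≠ t → n + 2 ≤ S.card → Pth G (1 + n) S x t := by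
  intro n
  induction n with
  | zero =>
    intro S x t h hx ht hxt _
    exact (Pth.edge (h x hx t ht hxt)).mono (by grind)
  | succ n ih =>
    intro S x t h hx ht hxt hn
    obtain ⟨c, hc⟩ : ((S.erase x).erase t).Nonempty := by
      rw [← Finset.card_pos, Finset.card_erase_of_mem (by simp [ht, hxt.symm]),
        Finset.card_erase_of_mem hx]
      omega
    simp only [Finset.mem_erase] at hc
    have := ih (S := S.erase x) (x := c) (t := t) (h.mono (Finset.erase_subset _ _))
      (by simp [hc.2]) (by simp [ht, hxt.symm]) hc.1
      (by rw [Finset.card_erase_of_mem hx]; omega)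
    rw [add_comm n 1]
    refine (Pth.cons (h x hx c hc.2.2 hc.2.1.symm) this (by simp)).mono ?_
    rw [Finset.insert_erase hx]

/-- A clique has a path of any length below its size ending in a given vertex. -/
lemma Clq.path_to {G : SimpleGraph V} {n : ℕ} {S : Finset V} {t : V} (h : Clq G S) (ht : t ∈ S)
    (hn : n + 1 ≤ S.card) : ∃ c ∈ S, Pth G n S c t := by
  rcases n with - | n
  · exact ⟨t, ht, Pth.refl G ht⟩
  · obtain ⟨c, hc⟩ : (S.erase t).Nonempty := by
      rw [← Finset.card_pos, Finset.card_erase_of_mem ht]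
      omega
    simp only [Finset.mem_erase] at hc
    refine ⟨c, hc.2, ?_⟩
    rw [add_comm]
    exact h.path n hc.2 ht hc.1 (by omega)

/-- Every clique inside `U` extends to one that is maximal in `U`. -/
lemma Clq.extend {G : SimpleGraph V} {S U : Finset V} (h : Clq G S) (hS : S ⊆ U) :
    ∃ S', S ⊆ S' ∧ S' ⊆ U ∧ Clq G S' ∧ ∀ u ∈ U, u ∉ S' → ∃ s ∈ S', ¬ G.Adj u s := by
  classical
  obtain ⟨S', hS', hmax⟩ := (U.powerset.filter fun T => S ⊆ T ∧ Clq G T).exists_max_image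
    Finset.card ⟨S, by simp [hS, h]⟩
  simp only [Finset.mem_filter, Finset.mem_powerset] at hS' hmax
  refine ⟨S', hS'.2.1, hS'.1, hS'.2.2, fun u hu huS => ?_⟩
  by_contra hcon
  push Not at hcon
  have := hmax (insert u S') ⟨by grind, by grind, by
    intro a ha b hb hab
    have := hS'.2.2 a
    have := hcon a
    have := hcon b
    have := G.adj_comm a b
    grind⟩
  rw [Finset.card_insert_of_notMem huS] at this
  omega

section cliques

variable {G : SimpleGraph V} {Ω : Finset V} {x y : V} {k : ℕ}

lemma Inst.nbr_mem (C : Inst G Ω x y) {w : V} (hw : G.Adj x w) : w ∈ Ω := by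
  have := C.supp w x hw.symm
  have := hw.ne
  have := C.nadj
  grind

/-- A maximal clique of at least three vertices containing `x` suffices as soon as `y` has a
neighbour outside it. -/
lemma Ctx.clique_core (C : Ctx G Ω x y k) {S : Finset V} (hS : Clq G S) (hx : x ∈ S)
    (hSΩ : S ⊆ insert x Ω) (hc : 3 ≤ S.card)
    (hmax : ∀ u ∈ insert x Ω, u ∉ S → ∃ s ∈ S, ¬ G.Adj u s)
    (hy : ∃ u, G.Adj y u ∧ u ∉ S) : Adm G k x y := by
  have hxy := C.ne; have hxn := C.xnot; have hyn := C.ynot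
  obtain ⟨D, R⟩ := C.reg_init hx (by grind) hy
  have hce : (S.erase x).card = S.card - 1 := Finset.card_erase_of_mem hx
  obtain ⟨t0, ht0⟩ : (S.erase x).Nonempty := by rw [← Finset.card_pos]; omega
  rcases C.step R (T := S.erase x) ⟨t0, ht0⟩ (Finset.erase_subset _ _) (by grind) (S.card - 1)
    (by omega) ⟨1, 1, Or.inl rfl, fun i hi t ht => by
      rw [one_mul]
      exact hS.path i hx (Finset.mem_of_mem_erase ht) (Finset.ne_of_mem_erase ht).symm
        (by omega)⟩ (by
      intro u hu
      by_cases hat : ∃ t ∈ S.erase x, G.Adj u t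
      · refine Or.inr ⟨?_, hat⟩
        obtain ⟨s, hs, hus⟩ := hmax u (Finset.mem_insert_of_mem (R.sub hu)) (R.disj u hu)
        rw [← Finset.card_erase_of_mem hs]
        refine Finset.card_le_card fun w hw => ?_
        simp only [Finset.mem_inter, mem_nbr, Finset.mem_erase] at hw ⊢
        exact ⟨fun h => hus (h ▸ hw.1), hw.2⟩
      · left
        push Not at hat
        have : (nbr G u ∩ S).card ≤ ({x} : Finset V).card := by
          refine Finset.card_le_card fun w hw => ?_
          have := hat w
          simp only [Finset.mem_inter, mem_nbr, Finset.mem_erase, Finset.mem_singleton] at *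
          tauto
        simp only [Finset.card_singleton] at this
        omega) with h | ⟨E, hE, w, R', hE'⟩
  · exact h
  · refine C.reg_cut R' ⟨t0, by grind, by grind⟩ fun e he s hs ha => ?_
    by_contra hsx
    exact hE' e he s (by simp [hs, hsx]) ha

/-- The case of two roots whose neighbourhoods are the same clique. -/
lemma Ctx.clique_twin (C : Ctx G Ω x y k) (hK : Clq G (nbr G x)) (hc : 2 ≤ (nbr G x).card)
    (hxy' : nbr G x = nbr G y) : Adm G k x y := by
  have hxy := C.ne; have hxn := C.xnot; have hyn := C.ynot
  have hKΩ : ∀ u ∈ nbr G x, u ∈ Ω := fun u hu => C.toInst.nbr_mem (mem_nbr.mp hu)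
  have hyK : ∀ u, u ∈ nbr G x ↔ G.Adj u y := by
    intro u; rw [hxy', mem_nbr, G.adj_comm]
  have hxK : ∀ u, u ∈ nbr G x ↔ G.Adj u x := by
    intro u; rw [mem_nbr, G.adj_comm]
  obtain ⟨p, hp⟩ : (nbr G x).Nonempty := by rw [← Finset.card_pos]; omega
  have hcl : ∀ K ⊆ nbr G x, Clq G (insert x K) := by
    intro K hK' a ha b hb hab
    have := hK a; have := hxK b; have := hxK a; have := G.adj_comm x b
    grind
  have hce := Finset.card_erase_of_mem hp
  by_cases hk : k ≤ (nbr G x).card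
  · refine AP.shift (c := 1) (P := fun n => Pth G n (insert x (nbr G x)) x p)
      ⟨1, 1, Or.inl rfl, fun i hi => ?_⟩ ?_
    · rw [one_mul]
      refine (hcl _ subset_rfl).path i (by simp) (by simp [hp]) (by grind) ?_
      rw [Finset.card_insert_of_notMem (by grind)]
      omega
    · intro n hn
      rw [add_comm]
      exact (hn.snoc ((hyK p).mp hp) (by grind)).mono (Finset.subset_univ _)
  obtain ⟨D, hD, d1, d2, d3⟩ := region G (Ω \ nbr G x) p (by simp [hp])
  have hDne : D.Nonempty := by
    by_contra hcon
    have h5 := C.deg p (hKΩ p hp)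
    have h6 : nbr G p ⊆ insert y (insert x ((nbr G x).erase p)) := by
      intro w hw
      have hw := mem_nbr.mp hw
      have := C.supp w p hw.symm
      have := d2 w
      have := hw.symm
      have := hw.ne
      simp only [Finset.mem_insert, Finset.mem_erase]
      grind
    have h7 := Finset.card_le_card h6
    have h8 := Finset.card_insert_le y (insert x ((nbr G x).erase p))
    have h9 := Finset.card_insert_le x ((nbr G x).erase p)
    omega
  have R : Reg G Ω y (insert x ((nbr G x).erase p)) D p := by
    refine ⟨by grind, hDne, by grind, by grind, by grind, ?_, d1, 1, {p, y},
      Pth.edge ((hyK p).mp hp), ?_, by grind⟩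
    · intro u hu z hz
      have := C.supp z u hz.symm
      have := d3 u hu z
      have := hyK u
      have := hxK u
      grind
    · have := ((hyK p).mp hp).ne
      grind
  rcases C.step R (T := (nbr G x).erase p) (by rw [← Finset.card_pos]; omega) (by grind)
    (by grind) ((nbr G x).card - 1)
    (by omega) ⟨1, 1, Or.inl rfl, fun i hi t ht => by
      rw [one_mul]
      refine (hcl _ (Finset.erase_subset _ _)).path i (by simp) (by simp [ht]) (by grind) ?_
      rw [Finset.card_insert_of_notMem (by grind)]
      omega⟩ (by
      intro u hu
      have h10 : nbr G u ∩ insert x ((nbr G x).erase p) ⊆ (nbr G x).erase p := by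
        intro w hw
        have := hxK u
        have := mem_nbr (G := G) (u := u) (z := w)
        grind
      by_cases hat : ∃ t ∈ (nbr G x).erase p, G.Adj u t
      · exact Or.inr ⟨hce ▸ Finset.card_le_card h10, hat⟩
      · left
        push Not at hat
        have : nbr G u ∩ insert x ((nbr G x).erase p) = ∅ := by
          rw [Finset.eq_empty_iff_forall_notMem]
          intro w hw
          exact hat w (h10 hw) (mem_nbr.mp (Finset.mem_inter.mp hw).1)
        rw [this, Finset.card_empty]
        omega) with h | ⟨E, hE, w, R', hE'⟩
  · exact h
  · obtain ⟨t, ht⟩ : ((nbr G x).erase p).Nonempty := by rw [← Finset.card_pos]; omega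
    refine C.reg_cut R' ⟨t, by grind, by grind⟩ fun e he s hs ha => ?_
    have := hE' e he s
    grind

lemma Ctx.two_le_nbr (C : Ctx G Ω x y k) (hk : 2 ≤ k) (hA : ¬ Adm G k x y) :
    2 ≤ (nbr G x).card := by
  by_contra h
  rcases (nbr G x).eq_empty_or_nonempty with h0 | ⟨n0, hn0⟩
  · refine hA (C.leaf hk (x' := x) fun u hu => ?_)
    have := mem_nbr.mpr hu
    simp [h0] at this
  · refine hA (C.leaf hk (x' := n0) fun u hu => ?_)
    exact Finset.card_le_one.mp (by omega) u (mem_nbr.mpr hu) n0 hn0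

/-- The theorem holds if a root lies in a triangle. -/
lemma Ctx.triangle (C : Ctx G Ω x y k) (hk : 2 ≤ k) {p q : V}
    (hxp : G.Adj x p) (hxq : G.Adj x q) (hpq : G.Adj p q) : Adm G k x y := by
  by_contra hA
  have hyy := C.symm.two_le_nbr hk fun h => hA h.symm
  -- a maximal clique through a triangle at one root contains the neighbourhood of the other
  have key : ∀ x y, Ctx G Ω x y k → ¬ Adm G k x y → ∀ p q, G.Adj x p → G.Adj x q → G.Adj p q →
      ∃ S, Clq G S ∧ x ∈ S ∧ nbr G y ⊆ S := by
    intro x y C hA p q hxp hxq hpq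
    have hp := C.toInst.nbr_mem hxp
    have hq := C.toInst.nbr_mem hxq
    obtain ⟨S, s1, s2, s3, s4⟩ := Clq.extend (G := G) (S := {x, p, q}) (U := insert x Ω) (by
      intro a ha b hb hab
      have := hxp.symm; have := hxq.symm; have := hpq.symm
      grind) (by grind)
    refine ⟨S, s3, s1 (by simp), fun u hu => ?_⟩
    by_contra hcon
    refine hA (C.clique_core s3 (s1 (by simp)) s2 ?_ s4 ⟨u, mem_nbr.mp hu, hcon⟩)
    rw [← Finset.card_eq_three.mpr ⟨x, p, q, hxp.ne, hxq.ne, hpq.ne, rfl⟩]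
    exact Finset.card_le_card s1
  obtain ⟨S, s1, s2, s3⟩ := key x y C hA p q hxp hxq hpq
  obtain ⟨p', hp', q', hq', hpq'⟩ := Finset.one_lt_card.mp hyy
  have hna := C.nadj
  obtain ⟨S', t1, t2, t3⟩ := key y x C.symm (fun h => hA h.symm) p' q' (mem_nbr.mp hp')
    (mem_nbr.mp hq') (s1 _ (s3 hp') _ (s3 hq') hpq')
  have h1 : nbr G x = nbr G y := by
    ext u
    have h2 := @s3 u
    have h3 := @t3 u
    have h4 := s1 x s2 u
    have h5 := t1 y t2 u
    have := G.adj_comm x y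
    simp only [mem_nbr] at *
    grind
  refine hA (C.clique_twin (t1.mono t3) (h1 ▸ hyy) h1)

/-- The core formed by `x`, two neighbours `b`, `c` and a maximal clique `A` in their common
neighbourhood. -/
lemma Ctx.book_core (C : Ctx G Ω x y k) (h3 : ∀ p q, G.Adj x p → G.Adj x q → ¬ G.Adj p q)
    {b c : V} (hbc : b ≠ c) (hb : G.Adj x b) (hc : G.Adj x c) {A : Finset V} (hA : Clq G A)
    (hAΩ : A ⊆ Ω) (hcard : 2 ≤ A.card) (hAb : ∀ a ∈ A, G.Adj b a ∧ G.Adj c a)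
    (hmax : ∀ u ∈ Ω, u ∉ A → G.Adj b u → G.Adj c u → ∃ a ∈ A, ¬ G.Adj u a)
    (hy : ∃ u, G.Adj y u ∧ u ∉ insert x (insert b (insert c A))) : Adm G k x y := by
  have hxy := C.ne; have hxn := C.xnot; have hyn := C.ynot
  have hbΩ := C.toInst.nbr_mem hb
  have hcΩ := C.toInst.nbr_mem hc
  have hbA : b ∉ A := fun h => (hAb b h).1.ne rfl
  have hcA : c ∉ A := fun h => (hAb c h).2.ne rfl
  have hxA : x ∉ A := fun h => hxn (hAΩ h)
  have hxb := hb.ne; have hxc := hc.ne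
  have hAne : A.Nonempty := by rw [← Finset.card_pos]; omega
  obtain ⟨D, R⟩ := C.reg_init (S := insert x (insert b (insert c A))) (by simp) (by grind) hy
  have hux : ∀ u, G.Adj u x → ¬ G.Adj u b ∧ ¬ G.Adj u c := fun u hu =>
    ⟨fun h => h3 u b hu.symm hb h, fun h => h3 u c hu.symm hc h⟩
  rcases C.step R (T := A) hAne (by grind) hAΩ (A.card + 1) (by omega)
    ⟨2, 1, Or.inl rfl, fun i hi t ht => by
      by_cases hi' : i < A.card
      · obtain ⟨d, hd, hP⟩ := hA.path_to (n := i) ht (by omega)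
        rw [show 2 + 1 * i = 1 + (1 + i) by ring]
        exact (Pth.cons hb (Pth.cons (hAb d hd).1 hP hbA) (by grind)).mono (by grind)
      · obtain ⟨d, hd, hdt⟩ := Finset.exists_mem_ne (by omega : 1 < A.card) t
        obtain ⟨d', hd', hP⟩ := (hA.mono (Finset.erase_subset d A)).path_to (n := A.card - 2)
          (t := t) (by simp [ht, hdt.symm]) (by rw [Finset.card_erase_of_mem hd]; omega)
        rw [show 2 + 1 * i = 1 + (1 + (1 + (1 + (A.card - 2)))) by omega]
        have hd'' := Finset.mem_of_mem_erase hd'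
        exact (Pth.cons hb (Pth.cons (hAb d hd).1 (Pth.cons (hAb d hd).2.symm
          (Pth.cons (hAb d' hd'').2 hP (by grind)) (by grind)) (by grind)) (by grind)).mono
          (by grind)⟩
    (by
      intro u hu
      have hm : ∀ w, w ∈ nbr G u ∩ insert x (insert b (insert c A)) ↔
          G.Adj u w ∧ (w = x ∨ w = b ∨ w = c ∨ w ∈ A) := by
        intro w; simp
      have huS := R.disj u hu
      by_cases hat : ∃ t ∈ A, G.Adj u t
      · refine Or.inr ⟨?_, hat⟩
        by_cases huxa : G.Adj u x
        · rw [← Finset.card_insert_of_notMem hxA]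
          refine Finset.card_le_card fun w hw => ?_
          have := (hm w).mp hw
          have := hux u huxa
          grind
        · by_cases hub : G.Adj u b
          · by_cases huc : G.Adj u c
            · obtain ⟨a, ha, hua⟩ := hmax u (R.sub hu) (by grind) hub.symm huc.symm
              have h5 : (insert b (insert c (A.erase a))).card ≤ A.card + 1 := by
                have := Finset.card_insert_le b (insert c (A.erase a))
                have := Finset.card_insert_le c (A.erase a)
                have := Finset.card_erase_of_mem ha
                omega
              refine le_trans (Finset.card_le_card fun w hw => ?_) h5
              have := (hm w).mp hw
              grind
            · rw [← Finset.card_insert_of_notMem hbA]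
              refine Finset.card_le_card fun w hw => ?_
              have := (hm w).mp hw
              grind
          · rw [← Finset.card_insert_of_notMem hcA]
            refine Finset.card_le_card fun w hw => ?_
            have := (hm w).mp hw
            grind
      · left
        push Not at hat
        by_cases huxa : G.Adj u x
        · have : (nbr G u ∩ insert x (insert b (insert c A))).card ≤ ({x} : Finset V).card := by
            refine Finset.card_le_card fun w hw => ?_
            have := (hm w).mp hw
            have := hux u huxa
            grind
          rw [Finset.card_singleton] at this
          omega
        · have : (nbr G u ∩ insert x (insert b (insert c A))).card ≤ ({b, c} : Finset V).card := by
            refine Finset.card_le_card fun w hw => ?_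
            have := (hm w).mp hw
            grind
          have := Finset.card_le_two (a := b) (b := c)
          omega) with h | ⟨E, hE, w, R', hE'⟩
  · exact h
  obtain ⟨a, ha, a', ha', haa⟩ := Finset.one_lt_card.mp (by omega : 1 < A.card)
  have paths : ∀ b c, G.Adj x b → G.Adj x c → b ≠ c → (∀ a ∈ A, G.Adj b a ∧ G.Adj c a) →
      Pth G (3 + 1 * 0) (insert x (insert b (insert c A))) x b ∧
      Pth G (3 + 1 * 1) (insert x (insert b (insert c A))) x b := by
    intro b c hb hc hbc hAb
    have hbA : b ∉ A := fun h => (hAb b h).1.ne rfl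
    have hcA : c ∉ A := fun h => (hAb c h).2.ne rfl
    have hxb := hb.ne; have hxc := hc.ne
    constructor
    · exact (Pth.cons hc (Pth.cons (hAb a ha).2 (Pth.edge (hAb a ha).1.symm) (by grind))
        (by grind)).mono (by grind)
    · exact (Pth.cons hc (Pth.cons (hAb a' ha').2 (Pth.cons (hA a' ha' a ha haa.symm)
        (Pth.edge (hAb a ha).1.symm) (by grind)) (by grind)) (by grind)).mono (by grind)
  rcases C.step R' (T := {b, c}) (by simp) (by grind) (by grind) 2 (by omega)
    ⟨3, 1, Or.inl rfl, fun i hi t ht => by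
      have p1 := paths b c hb hc hbc hAb
      have p2 := paths c b hc hb hbc.symm fun a ha => (hAb a ha).symm
      rw [Finset.insert_comm c b A] at p2
      simp only [Finset.mem_insert, Finset.mem_singleton] at ht
      interval_cases i <;> rcases ht with rfl | rfl <;> tauto⟩
    (by
      intro u hu
      have hm : ∀ w, w ∈ nbr G u ∩ insert x (insert b (insert c A)) →
          G.Adj u w ∧ (w = x ∨ w = b ∨ w = c) := by
        intro w hw
        have := hE' u hu w
        simp at hw
        tauto
      by_cases huxa : G.Adj u x
      · left
        have : (nbr G u ∩ insert x (insert b (insert c A))).card ≤ ({x} : Finset V).card := by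
          refine Finset.card_le_card fun w hw => ?_
          have := hm w hw
          have := hux u huxa
          grind
        rw [Finset.card_singleton] at this
        omega
      · have : (nbr G u ∩ insert x (insert b (insert c A))).card ≤ ({b, c} : Finset V).card := by
          refine Finset.card_le_card fun w hw => ?_
          have := hm w hw
          grind
        have h6 := Finset.card_le_two (a := b) (b := c)
        by_cases hat : ∃ t ∈ ({b, c} : Finset V), G.Adj u t
        · exact Or.inr ⟨by omega, hat⟩
        · left
          push Not at hat
          have : nbr G u ∩ insert x (insert b (insert c A)) = ∅ := by
            rw [Finset.eq_empty_iff_forall_notMem]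
            intro w hw
            have := hm w hw
            have := hat w
            grind
          rw [this, Finset.card_empty]
          omega) with h | ⟨E2, hE2, w2, R2, hE2'⟩
  · exact h
  · refine C.reg_cut R2 ⟨b, by simp, hbΩ⟩ fun e he s hs ha => ?_
    have := hE' e (hE2 he) s
    have := hE2' e he s
    grind

/-- The case of two roots whose neighbourhoods are the same pair. -/
lemma Ctx.book_twin (C : Ctx G Ω x y k) {b c d : V} (hbc : b ≠ c)
    (hx : ∀ u, G.Adj x u ↔ u = b ∨ u = c) (hy : ∀ u, G.Adj y u ↔ u = b ∨ u = c)
    (hd : d ∈ Ω) (hdb : d ≠ b) (hdc : d ≠ c) : Adm G k x y := by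
  have hxy := C.ne; have hxn := C.xnot; have hyn := C.ynot
  have hxb : G.Adj x b := (hx b).mpr (Or.inl rfl)
  have hyc : G.Adj y c := (hy c).mpr (Or.inr rfl)
  have hbΩ := C.toInst.nbr_mem hxb
  have hcΩ := C.symm.toInst.nbr_mem hyc
  have hnb : ∀ u ∈ Ω \ {b, c}, ∀ z, G.Adj u z → z ∈ Ω := by
    intro u hu z ha
    have := C.supp z u ha.symm
    have := hx u; have := hy u
    have := ha.symm
    grind
  have R : Reg G Ω y {x, b} (Ω \ {b, c}) c := by
    refine ⟨by grind, ⟨d, by grind⟩, by grind, by grind, by grind, ?_, ?_, 1, {c, y},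
      Pth.edge hyc.symm, by grind, by grind⟩
    · intro u hu z ha
      have := hnb u hu z ha
      grind
    · intro E hE hne
      obtain ⟨e, he, z, hz, hzb, ha⟩ := C.conn E (by grind) hne b
      have := hnb e (hE he) z ha
      exact ⟨e, he, z, hz, by grind, ha⟩
  rcases C.step R (T := {b}) (by simp) (by grind) (by grind) 1 le_rfl
    (AP.one (n := 1) (by simpa using Pth.edge hxb)) (by
      intro u hu
      have : nbr G u ∩ {x, b} ⊆ {b} := by
        intro w hw
        have := hnb u hu w
        simp only [Finset.mem_inter, mem_nbr] at hw
        grind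
      by_cases hub : G.Adj u b
      · right
        exact ⟨(Finset.card_le_card this).trans (by simp), b, by simp, hub⟩
      · left
        have : nbr G u ∩ {x, b} = ∅ := by
          rw [Finset.eq_empty_iff_forall_notMem]
          intro w hw
          have := this hw
          simp only [Finset.mem_inter, mem_nbr] at hw
          grind
        rw [this, Finset.card_empty]) with h | ⟨E, hE, w, R', hE'⟩
  · exact h
  · refine C.reg_cut R' ⟨b, by simp, hbΩ⟩ fun e he s hs ha => ?_
    have := hE' e he s
    grind

/-- The theorem holds if two neighbours of a root have two adjacent common neighbours in `Ω`. -/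
lemma Ctx.book (C : Ctx G Ω x y k) (hk : 2 ≤ k) {b c a a' : V} (hbc : b ≠ c) (hb : G.Adj x b)
    (hc : G.Adj x c) (ha : a ∈ Ω) (ha' : a' ∈ Ω) (haa : G.Adj a a') (hba : G.Adj b a)
    (hca : G.Adj c a) (hba' : G.Adj b a') (hca' : G.Adj c a') : Adm G k x y := by
  by_contra hA
  have key : ∀ x y, Ctx G Ω x y k → ¬ Adm G k x y → G.Adj x b → G.Adj x c →
      ∀ u, G.Adj y u ↔ u = b ∨ u = c := by
    intro x y C hA hb hc
    have hyy := C.symm.two_le_nbr hk fun h => hA h.symm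
    obtain ⟨A, s1, s2, s3, s4⟩ := Clq.extend (G := G) (S := {a, a'})
      (U := Ω ∩ (nbr G b ∩ nbr G c)) (by
        intro p hp q hq hpq
        have := haa.symm
        grind) (by
        intro u hu
        have : u = a ∨ u = a' := by simpa using hu
        simp only [Finset.mem_inter, mem_nbr]
        grind)
    have hAm : ∀ u ∈ A, u ∈ Ω ∧ G.Adj b u ∧ G.Adj c u := fun u hu => by simpa using s2 hu
    have hsub : ∀ u, G.Adj y u → u ∈ insert x (insert b (insert c A)) := by
      intro u hu
      by_contra hcon
      refine hA (C.book_core (fun p q hp hq hpq => hA (C.triangle hk hp hq hpq)) hbc hb hc s3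
        (fun u hu => (hAm u hu).1) ?_ (fun u hu => (hAm u hu).2) ?_ ⟨u, hu, hcon⟩)
      · rw [← Finset.card_pair haa.ne]
        exact Finset.card_le_card s1
      · intro u hu huA h1 h2
        exact s4 u (by simp [hu, h1, h2]) huA
    have hno : ∀ p q, G.Adj y p → G.Adj y q → ¬ G.Adj p q :=
      fun p q hp hq hpq => hA (C.symm.triangle hk hp hq hpq).symm
    have hna := C.nadj
    have hone : ∀ u, G.Adj y u → u = b ∨ u = c := by
      intro u hu
      by_contra hcon
      obtain ⟨w, hw, hwu⟩ := Finset.exists_mem_ne (by omega : 1 < (nbr G y).card) u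
      have hw := mem_nbr.mp hw
      have h5 := hsub u hu
      have h6 := hsub w hw
      have h7 := hno u w hu hw
      have h8 := hAm u
      have h9 := s3 u
      have := G.adj_comm x y
      have := G.adj_comm b u
      have := G.adj_comm c u
      grind
    intro u
    refine ⟨hone u, ?_⟩
    obtain ⟨p, hp, q, hq, hpq⟩ := Finset.one_lt_card.mp (by omega : 1 < (nbr G y).card)
    have hp := mem_nbr.mp hp
    have hq := mem_nbr.mp hq
    have := hone p hp
    have := hone q hq
    grind
  have hy := key x y C hA hb hc
  have hx := key y x C.symm (fun h => hA h.symm) ((hy b).mpr (Or.inl rfl))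
    ((hy c).mpr (Or.inr rfl))
  exact hA (C.book_twin hbc hx hy ha hba.ne' hca.ne')

end cliques

end CycMod

/-! ### Regions behind two vertices -/

namespace CycMod

variable {V : Type*} [Fintype V] [DecidableEq V]

section bad

variable {G : SimpleGraph V} {Ω : Finset V} {x y : V} {k : ℕ} {a : V} {B : Finset V}

/-- A region whose only neighbour in the core `{x, a} ∪ B` is `a` is reached through a path
`x b a`. -/
lemma Ctx.only_a (C : Ctx G Ω x y k) (ha : a ∈ Ω)
    (hB : ∀ b ∈ B, b ∈ Ω ∧ G.Adj x b ∧ G.Adj a b) (hBne : B.Nonempty) {F : Finset V} {w : V}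
    (R : Reg G Ω y (insert x (insert a B)) F w) (h1 : ∀ e ∈ F, ∀ b ∈ B, ¬ G.Adj e b)
    (h2 : ∀ e ∈ F, ¬ G.Adj e x) : Adm G k x y := by
  have hxn := C.xnot
  obtain ⟨b, hb⟩ := hBne
  have hb' := hB b hb
  have hm : ∀ u ∈ F, nbr G u ∩ insert x (insert a B) ⊆ {a} := by
    intro u hu w hw
    have := h1 u hu w
    have := h2 u hu
    simp only [Finset.mem_inter, mem_nbr] at hw
    grind
  rcases C.step R (T := {a}) (by simp) (by grind) (by simpa using ha) 1 le_rfl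
    (AP.one (n := 2) (by
      have := hb'.2.1.ne
      have := hb'.2.2.ne
      simpa using (Pth.cons hb'.2.1 (Pth.edge hb'.2.2.symm) (by grind)).mono (by grind))) (by
      intro u hu
      by_cases hua : G.Adj u a
      · exact Or.inr ⟨(Finset.card_le_card (hm u hu)).trans (by simp), a, by simp, hua⟩
      · left
        have : nbr G u ∩ insert x (insert a B) = ∅ := by
          rw [Finset.eq_empty_iff_forall_notMem]
          intro w hw
          have := hm u hu hw
          simp only [Finset.mem_inter, mem_nbr] at hw
          grind
        rw [this, Finset.card_empty]) with h | ⟨E, hE, w, R', hE'⟩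
  · exact h
  · refine C.reg_cut R' ⟨a, by simp, ha⟩ fun e he s hs hes => ?_
    have := hE' e he s
    have := h1 e (hE he) s
    grind

/-- The case of a region attached at `y` itself: paths run from `x` to `a` outside the region and
from `a` to `y` inside it. -/
lemma Ctx.bad_y (C : Ctx G Ω x y k) (hk : 3 ≤ k) (ha : a ∈ Ω)
    (hB : ∀ b ∈ B, b ∈ Ω ∧ G.Adj x b ∧ G.Adj a b) (hBne : B.Nonempty) {E : Finset V}
    (R : Reg G Ω y (insert x (insert a B)) E y) (hE : ∀ e ∈ E, ∀ b ∈ B, ¬ G.Adj e b) :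
    Adm G k x y := by
  by_contra hA
  have hxy := C.ne; have hxn := C.xnot; have hyn := C.ynot
  have hEn : ∀ u ∈ E, u ∈ Ω ∧ u ≠ a ∧ ∀ z, G.Adj u z → z ∈ E ∨ z = x ∨ z = a ∨ z = y := by
    intro u hu
    have h1 := R.sub hu
    have h2 := R.disj u hu
    refine ⟨h1, by grind, fun z hz => ?_⟩
    have := R.nb u hu z hz
    have := hE u hu z
    grind
  -- paths from `a` to `y` through `E`
  obtain ⟨G₁, t₁, g1, g2, g3⟩ := contract_one (G := G) (D := E) (t := a) (v := y)
    (fun h => (hEn a h).2.1 rfl) R.vD (fun h => hyn (h ▸ ha)) R.ne R.conn (by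
      intro F hF hne hat w
      by_contra hcon
      push Not at hcon
      refine hA (C.cut w (hF.trans R.sub) hne ?_ ?_)
      · rintro rfl
        exact (hEn a (hF ha)).2.1 rfl
      · intro e he z hz
        have := (hEn e (hF he)).2.2 z hz
        have := hat e he
        have := hcon e he z
        grind)
  have f1 : AP (k - 1) fun n => Pth G n (insert a (insert y E)) a y := by
    refine AP.imp (C.hyp G₁ E t₁ y (k - 1) (Finset.card_lt_card
      (R.sub.ssubset_of_ne fun h => (hEn a (h ▸ ha)).2.1 rfl)) g1 ?_) g3
    intro u hu
    have h1 := C.deg u (R.sub hu)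
    have h2 := g2 u hu
    have h3 := card_nbr_le (G := G) (u := u) (A := insert a (insert y E)) (B := {x}) (by
      intro z hz
      have := (hEn u hu).2.2 z hz
      grind)
    have h4 := Finset.card_le_card (Finset.inter_subset_right (s₁ := nbr G u) (s₂ := {x}))
    rw [Finset.card_singleton] at h4
    omega
  -- paths from `x` to `a` through the rest
  have hW : ∀ u ∈ (Ω \ E).erase a, ∀ z, G.Adj u z →
      z ∈ (Ω \ E).erase a ∨ z = a ∨ z = x ∨ z = y := by
    intro u hu z hz
    have := C.supp z u hz.symm
    have := hEn z
    have := hz.symm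
    have h4 : u ≠ x ∧ u ≠ y := by grind
    have := (hEn z)
    grind
  obtain ⟨b, hb⟩ := hBne
  obtain ⟨G₂, t₂, e1, e2, e3⟩ := contract_one (G := G) (D := (Ω \ E).erase a) (t := x) (v := a)
    (by grind) (by simp) (by grind) ⟨b, by
      have := hB b hb
      have := this.2.2.ne
      have := R.disj b
      grind⟩ (by
      intro F hF hne
      by_contra hcon
      push Not at hcon
      refine hA (C.cut y (fun u hu => by have := hF hu; grind) hne ?_ ?_)
      · rintro rfl
        simpa using hF ha
      · intro e he z hz
        have := hW e (hF he) z hz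
        have := hcon e he z
        grind) (by
      intro F hF hne hat w
      by_contra hcon
      push Not at hcon
      refine hA (C.cut_y w (fun u hu => by have := hF hu; grind) hne ?_ ?_)
      · rintro rfl
        simpa using hF ha
      · intro e he z hz
        have := hW e (hF he) z hz
        have := hcon e he z
        have := hat e he
        grind)
  have f2 : AP 2 fun n => Pth G n (insert x (insert a ((Ω \ E).erase a))) x a := by
    refine AP.imp (C.hyp G₂ _ t₂ a 2 (Finset.card_lt_card
      (Finset.ssubset_iff_subset_ne.mpr ⟨by grind, fun h => ?_⟩)) e1 ?_) e3
    · rw [← h] at ha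
      simp at ha
    intro u hu
    have h1 := C.deg u (by grind)
    have h2 := e2 u hu
    have h3 := card_nbr_le (G := G) (u := u) (A := insert x (insert a ((Ω \ E).erase a)))
      (B := {y}) (by
      intro z hz
      have := hW u hu z hz
      grind)
    have h4 := Finset.card_le_card (Finset.inter_subset_right (s₁ := nbr G u) (s₂ := {y}))
    rw [Finset.card_singleton] at h4
    omega
  refine hA (AP.sum f2 f1 (by omega) (by omega) (by omega) fun i j hi hj => ?_)
  refine (hi.trans hj ?_).mono (Finset.subset_univ _)
  have := R.sub
  grind

/-- For a maximal region, the attachment vertex has neighbours besides the region, `x` and any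
one further vertex: otherwise it could be moved into the region. -/
lemma Reg.absorb {E : Finset V} {w : V} (hxB : x ∉ insert a B)
    (R : Reg G Ω y (insert x (insert a B)) E w) (hE : ∀ e ∈ E, ∀ b ∈ B, ¬ G.Adj e b)
    (hwy : w ≠ y) (hw : w ∈ Ω)
    (hmax : ∀ E' w', Reg G Ω y (insert x (insert a B)) E' w' →
      (∀ e ∈ E', ∀ b ∈ B, ¬ G.Adj e b) → E'.card ≤ E.card) (z₀ : V) :
    ∃ z, G.Adj w z ∧ z ∉ E ∧ z ≠ x ∧ z ≠ z₀ := by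
  by_contra hcon
  push Not at hcon
  obtain ⟨n, Q, q1, q2, q3⟩ := R.lnk
  obtain ⟨m, z, rfl, hz, hP⟩ := q1.uncons hwy
  have hzQ := Finset.mem_of_mem_erase hP.left_mem
  have hzE := q3 z hzQ
  have hzS := q2 z hzQ
  obtain rfl := hcon z hz hzE (by grind)
  have hvS := R.vS; have hvD := R.vD
  have hzw := hz.ne
  have := hmax (insert w E) z ⟨?_, by simp, ?_, hzS, by grind, ?_, ?_, m, _, hP, by grind,
    by grind⟩ ?_
  · rw [Finset.card_insert_of_notMem R.vD] at this
    omega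
  · have := R.sub; grind
  · have := R.disj; grind
  · intro u hu v huv
    have := R.nb u
    have := hcon v
    grind
  · intro F hF hne
    by_cases hwF : w ∈ F
    · exact ⟨w, hwF, z, by grind, Or.inr rfl, hz⟩
    · obtain ⟨e, he, v, hv, hv', hev⟩ := R.conn F (by grind) hne
      exact ⟨e, he, v, hv, by grind, hev⟩
  · intro e he b hb heb
    rcases Finset.mem_insert.mp he with rfl | he
    · have h2 := hcon b heb (fun h => R.disj b h (by simp [hb]))
        (fun h => hxB (h ▸ Finset.mem_insert_of_mem hb))
      exact hzS (h2 ▸ by simp [hb])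
    · exact hE e he b hb heb

/-- The case of a maximal region attached at `w ≠ y`: paths run from `x` to `w` inside the region
and from `w` to `y` outside it. -/
lemma Ctx.bad_w (C : Ctx G Ω x y k) (hk : 3 ≤ k) (ha : a ∈ Ω)
    (hB : ∀ b ∈ B, b ∈ Ω ∧ G.Adj x b ∧ G.Adj a b) (hBne : B.Nonempty) {E : Finset V} {w : V}
    (R : Reg G Ω y (insert x (insert a B)) E w) (hE : ∀ e ∈ E, ∀ b ∈ B, ¬ G.Adj e b)
    (hwy : w ≠ y)
    (hmax : ∀ E' w', Reg G Ω y (insert x (insert a B)) E' w' →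
      (∀ e ∈ E', ∀ b ∈ B, ¬ G.Adj e b) → E'.card ≤ E.card) :
    Adm G k x y := by
  classical
  by_contra hA
  have hxy := C.ne; have hxn := C.xnot; have hyn := C.ynot
  have hEn : ∀ u ∈ E, u ∈ Ω ∧ u ≠ a ∧ ∀ z, G.Adj u z → z ∈ E ∨ z = x ∨ z = a ∨ z = w := by
    intro u hu
    have h1 := R.sub hu
    have h2 := R.disj u hu
    refine ⟨h1, by grind, fun z hz => ?_⟩
    have := R.nb u hu z hz
    have := hE u hu z
    grind
  have hvS := R.vS; have hvD := R.vD
  have hw : w ∈ Ω := by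
    obtain ⟨e, he, z, hz, hz', hez⟩ := R.conn E subset_rfl R.ne
    have := C.supp z e hez.symm
    grind
  have habs := R.absorb (by have := hB x; grind) hE hwy hw hmax
  have hwx : w ≠ x := by grind
  have hwa : w ≠ a := by grind
  -- paths from `x` to `w` through `E`
  obtain ⟨G₁, t₁, g1, g2, g3⟩ := contract_one (G := G) (D := E) (t := x) (v := w)
    (fun h => hxn (hEn x h).1) R.vD hwx R.ne R.conn (by
      intro F hF hne hat w'
      by_contra hcon
      push Not at hcon
      refine hA (C.only_a ha hB hBne (R.shrink (w := w') hF hne ?_) (fun e he => hE e (hF he)) hat)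
      intro e he z hz hz' hez
      by_contra h
      exact hcon e he z hz hz' h hez)
  have f1 : AP (k - 1) fun n => Pth G n (insert x (insert w E)) x w := by
    refine AP.imp (C.hyp G₁ E t₁ w (k - 1) (Finset.card_lt_card
      (R.sub.ssubset_of_ne fun h => (hEn a (h ▸ ha)).2.1 rfl)) g1 ?_) g3
    intro u hu
    have h1 := C.deg u (R.sub hu)
    have h2 := g2 u hu
    have h3 := card_nbr_le (G := G) (u := u) (A := insert x (insert w E)) (B := {a}) (by
      intro z hz
      have := (hEn u hu).2.2 z hz
      grind)
    have h4 := Finset.card_le_card (Finset.inter_subset_right (s₁ := nbr G u) (s₂ := {a}))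
    rw [Finset.card_singleton] at h4
    omega
  -- paths from `w` to `y` through the rest
  obtain ⟨Ω₂, hΩ₂⟩ : ∃ Ω₂, Ω₂ = (Ω \ E).erase w := ⟨_, rfl⟩
  have hΩm : ∀ u, u ∈ Ω₂ ↔ u ∈ Ω ∧ u ∉ E ∧ u ≠ w := by intro u; rw [hΩ₂]; grind
  have haΩ : a ∈ Ω₂ := by
    have := hEn a
    grind
  have hΩn : ∀ u ∈ Ω₂, ∀ z, G.Adj u z → z ∈ Ω₂ ∨ z = w ∨ z = x ∨ z = y ∨ (z ∈ E ∧ u = a) := by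
    intro u hu z hz
    have := C.supp z u hz.symm
    have := hEn z
    have := hz.symm
    have := hΩm u
    have := hΩm z
    grind
  have f2 : AP 2 fun n => Pth G n (insert w (insert y Ω₂)) w y := by
    -- `P F q` says that `F` contains `a` and that `q` separates `F` from the rest
    let P : Finset V → V → Prop := fun F q => F ⊆ Ω₂ ∧ a ∈ F ∧
      ∀ e ∈ F, ∀ z, z ∉ F → (z ∈ Ω₂ ∨ z = w ∨ z = y) → G.Adj e z → z = q
    -- `Ω₃` is where the paths run, and `s` is the vertex whose degree is not controlled
    obtain ⟨Ω₃, s, o1, o2, o3, o4, o5⟩ : ∃ Ω₃ s, Ω₃ ⊆ Ω₂ ∧ Ω₃.Nonempty ∧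
        (∀ u ∈ Ω₃, u ≠ s → ∀ z, G.Adj u z → z ∈ Ω₃ ∨ z = x ∨ z = w ∨ z = y) ∧
        (∀ F ⊆ Ω₃, F.Nonempty → ∀ w', ∃ f ∈ F, ∃ z, z ∉ F ∧ (z ∈ Ω₃ ∨ z = y ∨ z = w) ∧
          G.Adj f z ∧ z ≠ w') ∧
        ((∃ u ∈ Ω₃, u ≠ s) ∨ ∀ z, G.Adj w z → z ∈ E ∨ z = x ∨ z = s ∨ z = y) := by
      by_cases hP : ∃ F w', P F w'
      · obtain ⟨F0, w0, h0⟩ := hP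
        obtain ⟨E₂, hE₂, hE₂max⟩ := (Ω₂.powerset.filter fun F => ∃ w', P F w').exists_max_image
          Finset.card ⟨F0, by
            simp only [Finset.mem_filter, Finset.mem_powerset]
            exact ⟨h0.1, w0, h0⟩⟩
        simp only [Finset.mem_filter, Finset.mem_powerset] at hE₂ hE₂max
        obtain ⟨-, w₂, p1, p2, p3⟩ := hE₂
        have hP' : ∀ F w', P F w' → F.card ≤ E₂.card := fun F w' h => hE₂max F ⟨h.1, w', h⟩
        obtain ⟨hw₂, hw₂w, e0, he0, hew⟩ : w₂ ∉ E₂ ∧ w₂ ≠ w ∧ ∃ e ∈ E₂, G.Adj e w₂ := by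
          by_contra hcon
          push Not at hcon
          refine hA (C.cut (F := E ∪ E₂) w ?_ ⟨a, by grind⟩ ?_ ?_)
          · have := R.sub; grind
          · intro h
            rw [← h] at hw
            grind
          · intro e he z hz
            have h1 := hEn e
            have h2 := p3 e
            have h3 := hΩn e
            have := p1
            have := hcon
            grind
        have hE₂n : ∀ e ∈ E₂, ∀ z, G.Adj e z → z ∈ E₂ ∨ z = w₂ ∨ z = x ∨ z ∈ E := by
          intro e he z hz
          have := hΩn e (p1 he) z hz
          have := p3 e he z
          grind
        have hE₂n' : ∀ u ∈ Ω₂ \ E₂, ∀ z, G.Adj u z →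
            z ∈ Ω₂ \ E₂ ∨ z = x ∨ z = w ∨ z = y ∨ (z ∈ E₂ ∧ u = w₂) := by
          intro u hu z hz
          have := hΩn u (by grind) z hz
          have := hE₂n z
          have := hz.symm
          have := hΩm u
          have := hΩm z
          grind
        have hwE₂ : ∀ z, G.Adj w z → z ∉ E₂ := by
          intro z hz hz'
          have := hE₂n z hz' w hz.symm
          have := p1
          grind
        refine ⟨Ω₂ \ E₂, w₂, Finset.sdiff_subset, ?_, ?_, ?_, ?_⟩
        · obtain ⟨z, h1, h2, h3, h4⟩ := habs y
          refine ⟨z, ?_⟩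
          have := C.supp z w h1.symm
          have := hwE₂ z h1
          have := hΩm z
          have := h1.ne
          grind
        · intro u hu hus z hz
          have := hE₂n' u hu z hz
          grind
        · intro F hF hne w'
          by_contra hcon
          push Not at hcon
          by_cases hwF : w₂ ∈ F
          · have h1 := hP' (E₂ ∪ F) w' ⟨by grind, by grind, by
              intro e he z hz hz' hez
              have := hE₂n e
              have := hcon e
              have := hΩm z
              grind⟩
            have h2 : E₂.card < (E₂ ∪ F).card := by
              refine Finset.card_lt_card (Finset.ssubset_iff_subset_ne.mpr
                ⟨Finset.subset_union_left, fun h => hw₂ ?_⟩)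
              rw [h]
              exact Finset.mem_union_right _ hwF
            omega
          · refine hA (C.cut w' (F := F) (fun u hu => ?_) hne ?_ ?_)
            · have := hF hu; have := hΩm u; grind
            · rintro rfl
              have := hF ha
              grind
            · intro e he z hz
              have := hE₂n' e (hF he) z hz
              have := hcon e he z
              grind
        · by_cases hbig : ∃ u ∈ Ω₂ \ E₂, u ≠ w₂
          · exact Or.inl hbig
          · right
            push Not at hbig
            intro z hz
            have := C.supp z w hz.symm
            have := hwE₂ z hz
            have := hΩm z
            have := hz.ne
            have := hbig z
            grind
      · push Not at hP
        refine ⟨Ω₂, a, subset_rfl, ⟨a, haΩ⟩, ?_, ?_, ?_⟩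
        · intro u hu hua z hz
          have := hΩn u hu z hz
          grind
        · intro F hF hne w'
          by_contra hcon
          push Not at hcon
          by_cases haF : a ∈ F
          · refine hP F w' ⟨hF, haF, ?_⟩
            intro e he z hz hz' hez
            exact hcon e he z hz (by tauto) hez
          · refine hA (C.cut w' (F := F) (fun u hu => ?_) hne ?_ ?_)
            · have := hF hu; have := hΩm u; grind
            · rintro rfl
              exact haF ha
            · intro e he z hz
              have := hΩn e (hF he) z hz
              have := hcon e he z
              grind
        · obtain ⟨b, hb⟩ := hBne
          have h1 := hB b hb
          have := h1.2.2.ne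
          have := R.disj b
          have := hΩm b
          exact Or.inl ⟨b, by grind, by grind⟩
    have hyΩ₂ : y ∉ Ω₂ := by have := hΩm y; grind
    have hwΩ₂ : w ∉ Ω₂ := by have := hΩm w; grind
    by_cases hbig : ∃ u ∈ Ω₃, u ≠ s
    · obtain ⟨G₂, t₂, e1, e2, e3⟩ := contract_one (G := G) (D := Ω₃) (t := w) (v := y)
        (by grind) (by grind) hwy.symm o2 (by
          intro F hF hne
          obtain ⟨f, hf, z, hz, hz', hfz, hzw⟩ := o4 F hF hne w
          exact ⟨f, hf, z, hz, by tauto, hfz⟩) (by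
          intro F hF hne hat w'
          obtain ⟨f, hf, z, hz, hz', hfz, hzw⟩ := o4 F hF hne w'
          have := hat f hf
          exact ⟨f, hf, z, hz, by grind, hzw, hfz⟩)
      refine AP.imp (two_paths _ G₂ Ω₃ t₂ y s rfl e1 ?_ hbig) fun n hn =>
        (e3 n hn).mono (by grind)
      intro u hu hus
      have h1 := C.deg u (by have := hΩm u; grind)
      have h2 := e2 u hu
      have h3 := card_nbr_le (G := G) (u := u) (A := insert w (insert y Ω₃)) (B := {x}) (by
        intro z hz
        have := o3 u hu hus z hz
        grind)
      have h4 := Finset.card_le_card (Finset.inter_subset_right (s₁ := nbr G u) (s₂ := {x}))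
      rw [Finset.card_singleton] at h4
      omega
    · -- the only vertex `s` of `Ω₃` is adjacent to `w` and `y`, and so is `w` to `y`
      have hwN := o5.resolve_left hbig
      push Not at hbig
      obtain ⟨u, hu⟩ := o2
      obtain rfl := hbig u hu
      have hy : G.Adj u y := by
        obtain ⟨f, hf, z, hz, hz', hfz, hzw⟩ := o4 {u} (by simpa using hu) (by simp) w
        have := hbig z
        grind
      have hw' : G.Adj u w := by
        obtain ⟨f, hf, z, hz, hz', hfz, hzw⟩ := o4 {u} (by simpa using hu) (by simp) y
        have := hbig z
        grind
      have hwy' : G.Adj w y := by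
        obtain ⟨z, h1, h2, h3, h4⟩ := habs u
        have := hwN z h1
        grind
      refine ⟨1, 1, Or.inl rfl, fun i hi => ?_⟩
      have := o1 hu
      interval_cases i
      · exact (Pth.edge hwy').mono (by grind)
      · exact (Pth.cons hw'.symm (Pth.edge hy) (by grind)).mono (by grind)
  refine hA (AP.sum f1 f2 (by omega) (by omega) (by omega) fun i j hi hj => ?_)
  refine (hi.trans hj ?_).mono (Finset.subset_univ _)
  have := R.sub
  have := hΩm
  grind

/-- A region attached to the core `{x, a} ∪ B` without neighbours in `B` yields the paths. -/
lemma Ctx.bad (C : Ctx G Ω x y k) (hk : 3 ≤ k) (ha : a ∈ Ω)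
    (hB : ∀ b ∈ B, b ∈ Ω ∧ G.Adj x b ∧ G.Adj a b) (hBne : B.Nonempty) {E : Finset V} {w : V}
    (R : Reg G Ω y (insert x (insert a B)) E w) (hE : ∀ e ∈ E, ∀ b ∈ B, ¬ G.Adj e b) :
    Adm G k x y := by
  classical
  obtain ⟨E₁, h₁, hmax⟩ := (Finset.univ.filter fun E' : Finset V =>
    ∃ w', Reg G Ω y (insert x (insert a B)) E' w' ∧ ∀ e ∈ E', ∀ b ∈ B, ¬ G.Adj e b).exists_max_image
    Finset.card ⟨E, by
      simp only [Finset.mem_filter, Finset.mem_univ, true_and]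
      exact ⟨w, R, hE⟩⟩
  simp only [Finset.mem_filter, Finset.mem_univ, true_and] at h₁ hmax
  obtain ⟨w₁, R₁, hE₁⟩ := h₁
  by_cases hwy : w₁ = y
  · subst hwy
    exact C.bad_y hk ha hB hBne R₁ hE₁
  · exact C.bad_w hk ha hB hBne R₁ hE₁ hwy fun E' w' hR hn => hmax E' ⟨w', hR, hn⟩

end bad

end CycMod

/-! ### Complete bipartite cores -/

namespace CycMod

variable {V : Type*} [Fintype V] [DecidableEq V]

/-- In a complete bipartite graph, paths between the two sides have all short odd lengths. -/
lemma bip_path {G : SimpleGraph V} : ∀ (i : ℕ) {A B : Finset V} {x b : V}, Disjoint A B →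
    (∀ a ∈ A, ∀ b ∈ B, G.Adj a b) → x ∈ A → b ∈ B → i + 1 ≤ A.card → i + 1 ≤ B.card →
    Pth G (1 + 2 * i) (A ∪ B) x b
  | 0, A, B, x, b, _, hAB, hx, hb, _, _ => (Pth.edge (hAB x hx b hb)).mono (by grind)
  | i + 1, A, B, x, b, hd, hAB, hx, hb, hA, hB => by
    rw [Finset.disjoint_left] at hd
    have h1 := Finset.card_erase_of_mem hx
    have h2 := Finset.card_erase_of_mem hb
    obtain ⟨a, ha⟩ : (A.erase x).Nonempty := by rw [← Finset.card_pos]; omega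
    obtain ⟨c, hc⟩ : (B.erase b).Nonempty := by rw [← Finset.card_pos]; omega
    have hcB := Finset.mem_of_mem_erase hc
    have haA := Finset.mem_of_mem_erase ha
    have h3 := Finset.card_erase_of_mem hcB
    have h := bip_path (G := G) i (A := A.erase x) (B := B.erase c) (x := a) (b := b)
      (Finset.disjoint_left.mpr (by grind)) (by grind) ha (by grind) (by omega) (by omega)
    have h4 := Pth.cons (hAB a haA c hcB).symm h (by grind)
    have h5 := (Pth.cons (hAB x hx c hcB) h4 (by grind)).mono (D' := A ∪ B) (by grind)
    rwa [show 1 + 2 * (i + 1) = 1 + (1 + (1 + 2 * i)) by ring]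

/-- In a complete bipartite graph, paths within one side have all short even lengths. -/
lemma bip_path2 {G : SimpleGraph V} (i : ℕ) {A B : Finset V} {x a : V} (hd : Disjoint A B)
    (hAB : ∀ a ∈ A, ∀ b ∈ B, G.Adj a b) (hx : x ∈ A) (ha : a ∈ A) (hxa : x ≠ a)
    (hA : i + 2 ≤ A.card) (hB : i + 1 ≤ B.card) : Pth G (2 + 2 * i) (A ∪ B) x a := by
  rw [Finset.disjoint_left] at hd
  have h1 := Finset.card_erase_of_mem hx
  obtain ⟨c, hc⟩ : B.Nonempty := by rw [← Finset.card_pos]; omega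
  have h := bip_path (G := G) i (A := A.erase x) (B := B) (x := a) (b := c)
    (Finset.disjoint_left.mpr (by grind)) (by grind) (by grind) hc (by omega) hB
  have h5 := (Pth.cons (hAB x hx c hc) h.symm (by grind)).mono (D' := A ∪ B) (by grind)
  rwa [show 2 + 2 * i = 1 + (1 + 2 * i) by ring]

open Classical in
/-- The common neighbours of `A` in `Ω`. -/
noncomputable def com (G : SimpleGraph V) (Ω A : Finset V) : Finset V :=
  Ω.filter fun b => ∀ a ∈ A, G.Adj a b

lemma mem_com {G : SimpleGraph V} {Ω A : Finset V} {b : V} :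
    b ∈ com G Ω A ↔ b ∈ Ω ∧ ∀ a ∈ A, G.Adj a b := by
  simp [com]

/-- A balanced side at `x`: a set `A ∋ x` with at least `|A|` common neighbours. -/
structure Side (G : SimpleGraph V) (Ω : Finset V) (x : V) (A : Finset V) : Prop where
  mem : x ∈ A
  sub : A ⊆ insert x Ω
  card : A.card ≤ (com G Ω A).card

variable {G : SimpleGraph V} {Ω A : Finset V} {x y : V} {k : ℕ}

lemma com_disj (G : SimpleGraph V) (Ω A : Finset V) : Disjoint A (com G Ω A) := by
  rw [Finset.disjoint_left]
  intro a ha hb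
  exact (mem_com.mp hb).2 a ha |>.ne rfl

lemma Side.nonempty (hS : Side G Ω x A) : (com G Ω A).Nonempty := by
  have := Finset.card_pos.mpr ⟨x, hS.mem⟩
  have := hS.card
  rw [← Finset.card_pos]; omega

/-- By maximality, a vertex outside a largest balanced side `A` has at most `|A|` neighbours in
the common neighbourhood. -/
lemma Side.few (hS : Side G Ω x A) (hmax : ∀ A', Side G Ω x A' → A'.card ≤ A.card) {u : V}
    (hu : u ∈ Ω) (huA : u ∉ A) : (nbr G u ∩ com G Ω A).card ≤ A.card := by
  by_contra hcon
  have h1 : nbr G u ∩ com G Ω A ⊆ com G Ω (insert u A) := by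
    intro b hb
    simp only [Finset.mem_inter, mem_nbr, mem_com] at hb ⊢
    grind
  have h2 := Finset.card_le_card h1
  have h3 := Finset.card_insert_of_notMem huA
  have h4 := hmax (insert u A) ⟨by simp [hS.mem], by have := hS.sub; grind, by omega⟩
  omega

/-- Two common neighbours of `u` and `A` would form a book with `x`, `a` and `u`, where `u` is
adjacent to `a`; `Ctx.book` excludes this. -/
lemma Ctx.no_book (C : Ctx G Ω x y k) (hk : 2 ≤ k) (hN : ¬ Adm G k x y) (hS : Side G Ω x A)
    {a u : V} (ha : a ∈ A) (hax : a ≠ x) (hu : u ∈ Ω) (hua : G.Adj u a) :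
    (nbr G u ∩ com G Ω A).card ≤ 1 := by
  by_contra hcon
  push Not at hcon
  obtain ⟨b, hb, c, hc, hbc⟩ := Finset.one_lt_card.mp hcon
  simp only [Finset.mem_inter, mem_nbr, mem_com] at hb hc
  have := hS.sub ha
  exact hN (C.book hk hbc (hb.2.2 x hS.mem) (hc.2.2 x hS.mem) (a := a) (a' := u) (by grind) hu
    hua.symm (hb.2.2 a ha).symm (hc.2.2 a ha).symm hb.1.symm hc.1.symm)

/-- Unless the admissible paths exist, every neighbour of `y` lies in a largest balanced side or in
its common neighbourhood. -/
lemma Ctx.bip_core (C : Ctx G Ω x y k) (hk : 3 ≤ k) (hS : Side G Ω x A)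
    (hmax : ∀ A', Side G Ω x A' → A'.card ≤ A.card) (hN : ¬ Adm G k x y) :
    ∀ u, G.Adj y u → u ∈ A ∪ com G Ω A := by
  intro u₀ hu₀
  by_contra hu₀S
  obtain ⟨B, hB⟩ : ∃ B, B = com G Ω A := ⟨_, rfl⟩
  have hd := com_disj G Ω A; have hBne := hS.nonempty; have hAB := hS.card
  have hfew := fun u => hS.few hmax (u := u)
  have hbook := fun a u => C.no_book (by omega) hN hS (a := a) (u := u)
  have hBm : ∀ b, b ∈ B ↔ b ∈ Ω ∧ ∀ a ∈ A, G.Adj a b := by intro b; rw [hB, mem_com]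
  rw [← hB] at hu₀S hd hBne hAB
  simp only [← hB] at hfew hbook
  have hxn := C.xnot; have hyn := C.ynot; have hxy := C.ne
  have hx := hS.mem; have hsub := hS.sub
  have hd' := hd
  rw [Finset.disjoint_left] at hd'
  have hyS : y ∉ A ∪ B := by
    have := hBm y
    grind
  obtain ⟨D, R⟩ := C.reg_init (S := A ∪ B) (by grind) hyS ⟨u₀, hu₀, hu₀S⟩
  have hA1 : 1 ≤ A.card := Finset.card_pos.mpr ⟨x, hx⟩
  have hcomp : ∀ a ∈ A, ∀ b ∈ B, G.Adj a b := fun a ha b hb => ((hBm b).mp hb).2 a ha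
  -- outside the core no vertex is adjacent to all of `A`
  have hmiss : ∀ u ∈ Ω, u ∉ B → (nbr G u ∩ A).card + 1 ≤ A.card := by
    intro u hu huB
    obtain ⟨a, ha, hau⟩ : ∃ a ∈ A, ¬ G.Adj a u := by
      by_contra h
      push Not at h
      exact huB ((hBm u).mpr ⟨hu, h⟩)
    refine Finset.card_lt_card (Finset.ssubset_iff_subset_ne.mpr
      ⟨Finset.inter_subset_right, fun h => ?_⟩)
    rw [← h] at ha
    simp only [Finset.mem_inter, mem_nbr] at ha
    exact hau ha.1.symm
  rcases C.step R (T := B) hBne Finset.subset_union_right (fun b hb => ((hBm b).mp hb).1)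
    A.card hA1 ⟨1, 2, Or.inr rfl, fun i hi b hb =>
      bip_path i hd hcomp hx hb (by omega) (by omega)⟩ (by
    intro u hu
    have huΩ := R.sub hu
    have huS := R.disj u hu
    have hsplit : nbr G u ∩ (A ∪ B) = (nbr G u ∩ A) ∪ (nbr G u ∩ B) := by grind
    have hle := Finset.card_union_le (nbr G u ∩ A) (nbr G u ∩ B)
    rw [← hsplit] at hle
    have hm := hmiss u huΩ (by grind)
    by_cases hb : ∃ b ∈ B, G.Adj u b
    · right
      refine ⟨?_, hb⟩
      obtain ⟨b, hb, hub⟩ := hb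
      have hux : ¬ G.Adj u x := fun h => hN (C.triangle (by omega) h.symm (hcomp x hx b hb) hub)
      by_cases ha : ∃ a ∈ A, G.Adj u a
      · obtain ⟨a, ha, hua⟩ := ha
        have := hbook a u ha (by grind) huΩ hua
        omega
      · have : nbr G u ∩ A = ∅ := by
          rw [Finset.eq_empty_iff_forall_notMem]
          intro z hz
          simp only [Finset.mem_inter, mem_nbr] at hz
          exact ha ⟨z, hz.2, hz.1⟩
        have h2 := hfew u huΩ (by grind)
        rw [this, Finset.card_empty] at hle
        omega
    · left
      have : nbr G u ∩ B = ∅ := by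
        rw [Finset.eq_empty_iff_forall_notMem]
        intro z hz
        simp only [Finset.mem_inter, mem_nbr] at hz
        exact hb ⟨z, hz.2, hz.1⟩
      rw [this, Finset.card_empty] at hle
      omega) with h | ⟨E, hE, w, R', hE'⟩
  · exact hN h
  have hbΩ : ∃ s ∈ A ∪ B, s ∈ Ω := by
    obtain ⟨b, hb⟩ := hBne
    exact ⟨b, by simp [hb], ((hBm b).mp hb).1⟩
  have hEA : ∀ u ∈ E, nbr G u ∩ (A ∪ B) = nbr G u ∩ A := by
    intro u hu
    ext z
    have := hE' u hu z
    simp only [Finset.mem_inter, mem_nbr, Finset.mem_union]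
    tauto
  rcases Nat.lt_or_ge A.card 2 with h2 | h2
  · have hA0 : A = {x} := by
      obtain ⟨a, ha⟩ := Finset.card_eq_one.mp (show A.card = 1 by omega)
      rw [ha] at hx ⊢
      rw [Finset.mem_singleton.mp hx]
    refine hN (C.reg_cut R' hbΩ fun e he s hs hes => ?_)
    have := hE' e he s
    grind
  rcases Nat.lt_or_ge A.card 3 with h3 | h3
  · obtain ⟨a, ha⟩ := Finset.card_eq_one.mp
      (show (A.erase x).card = 1 by rw [Finset.card_erase_of_mem hx]; omega)
    have hA0 : A = insert x {a} := by rw [← ha, Finset.insert_erase hx]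
    have hax : a ∈ A.erase x := by simp [ha]
    have hSeq : A ∪ B = insert x (insert a B) := by rw [hA0]; grind
    rw [hSeq] at R'
    exact hN (C.bad hk (a := a) (B := B) (by grind) (fun b hb => ⟨((hBm b).mp hb).1,
      hcomp x hx b hb, hcomp a (by grind) b hb⟩) hBne R' hE')
  · have he := Finset.card_erase_of_mem hx
    rcases C.step R' (T := A.erase x) (by rw [← Finset.card_pos]; omega) (by grind) (by grind)
      (A.card - 1) (by omega) ⟨2, 2, Or.inr rfl, fun i hi a ha =>
        bip_path2 i hd hcomp hx (by grind) (by grind) (by omega) (by omega)⟩ (by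
      intro u hu
      rw [hEA u hu]
      have hm := hmiss u (R'.sub hu) (by have := R'.disj u hu; grind)
      by_cases ha : ∃ t ∈ A.erase x, G.Adj u t
      · exact Or.inr ⟨by omega, ha⟩
      · left
        have : nbr G u ∩ A ⊆ {x} := by
          intro z hz
          simp only [Finset.mem_inter, mem_nbr] at hz
          by_contra hzx
          exact ha ⟨z, by grind, hz.1⟩
        have := Finset.card_le_card this
        rw [Finset.card_singleton] at this
        omega) with h | ⟨F, hF, w', R'', hF'⟩
    · exact hN h
    · refine hN (C.reg_cut R'' hbΩ fun e he s hs hes => ?_)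
      have := hE' e (hF he) s
      have := hF' e he s
      grind

/-- The case of roots with the same neighbourhood, which is the common neighbourhood of a largest
balanced side: one vertex `b₁` of that neighbourhood is set aside as the last vertex before
`y`. -/
lemma Ctx.bip_twin (C : Ctx G Ω x y k) (hk : 3 ≤ k) (hS : Side G Ω x A)
    (hmax : ∀ A', Side G Ω x A' → A'.card ≤ A.card) (hx' : ∀ u, G.Adj x u → u ∈ com G Ω A)
    (hy' : ∀ u, G.Adj y u ↔ u ∈ com G Ω A) : Adm G k x y := by
  by_contra hN
  have hB2 := C.two_le_nbr (by omega) hN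
  obtain ⟨B, hB⟩ : ∃ B, B = com G Ω A := ⟨_, rfl⟩
  have hd := com_disj G Ω A; have hBne := hS.nonempty; have hAB := hS.card
  have hfew := fun u => hS.few hmax (u := u)
  have hbook := fun a u => C.no_book (by omega) hN hS (a := a) (u := u)
  have hBm : ∀ b, b ∈ B ↔ b ∈ Ω ∧ ∀ a ∈ A, G.Adj a b := by intro b; rw [hB, mem_com]
  rw [← hB] at hd hBne hAB
  simp only [← hB] at hfew hbook hx' hy'
  have hxn := C.xnot; have hyn := C.ynot; have hxy := C.ne
  have hx := hS.mem; have hsub := hS.sub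
  have hd' := hd
  rw [Finset.disjoint_left] at hd'
  have hcomp : ∀ a ∈ A, ∀ b ∈ B, G.Adj a b := fun a ha b hb => ((hBm b).mp hb).2 a ha
  have hA1 : 1 ≤ A.card := Finset.card_pos.mpr ⟨x, hx⟩
  have hyA : y ∉ A := by grind
  have hyB : y ∉ B := by have := hBm y; grind
  have hB2' : 2 ≤ B.card := hB2.trans (Finset.card_le_card fun u hu => hx' u (by simpa using hu))
  obtain ⟨b₁, hb₁⟩ := hBne
  by_cases hAk : k ≤ A.card
  · refine hN ⟨2, 2, Or.inr rfl, fun i hi => ?_⟩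
    have h1 := bip_path i hd hcomp hx hb₁ (by omega) (by omega)
    have h2 := (Pth.snoc h1 ((hy' b₁).mpr hb₁).symm (by grind)).mono (Finset.subset_univ _)
    rwa [show 2 + 2 * i = 1 + 2 * i + 1 by ring]
  obtain ⟨q, hq⟩ : ∃ q, q = min A.card (B.card - 1) := ⟨_, rfl⟩
  obtain ⟨A₀, hxA₀, hA₀, hA₀q⟩ := Finset.exists_subsuperset_card_eq (s := {x}) (t := A) (n := q)
    (by simpa using hx) (by rw [Finset.card_singleton]; omega) (by omega)
  have hx₀ : x ∈ A₀ := by simpa using hxA₀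
  have hBe := Finset.card_erase_of_mem hb₁
  have hcomp₀ : ∀ a ∈ A₀, ∀ b ∈ B.erase b₁, G.Adj a b := by grind
  have hd₀ : Disjoint A₀ (B.erase b₁) := Finset.disjoint_left.mpr (by grind)
  have hBB : ∀ b ∈ B, ∀ c ∈ B, ¬ G.Adj b c := fun b hb c hc h =>
    hN (C.triangle (by omega) (hcomp x hx b hb) (hcomp x hx c hc) h)
  -- the degree of `b₁` leaves room for a neighbour off the core
  obtain ⟨u₁, hu₁, hu₁'⟩ : ∃ u, G.Adj b₁ u ∧ u ∈ (Ω \ A₀) \ B := by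
    by_contra hcon
    push Not at hcon
    have h1 := C.deg b₁ ((hBm b₁).mp hb₁).1
    have h2 : nbr G b₁ ⊆ insert y A₀ := by
      intro z hz
      rw [mem_nbr] at hz
      have := hcon z hz
      have := hBB b₁ hb₁ z
      have := C.supp z b₁ hz.symm
      grind
    have h3 := Finset.card_le_card h2
    have h4 := Finset.card_insert_le y A₀
    omega
  obtain ⟨D, hD, r1, r2, r3⟩ := region G ((Ω \ A₀) \ B) b₁ (by simp [hb₁])
  have R : Reg G Ω y (A₀ ∪ B.erase b₁) D b₁ := by
    refine ⟨by grind, ⟨u₁, r2 u₁ hu₁' hu₁.symm⟩, by grind, by grind, by grind, ?_, r1, 1, {b₁, y},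
      Pth.edge ((hy' b₁).mpr hb₁).symm, by grind, by grind⟩
    intro a ha z haz
    have := C.supp z a haz.symm
    have := r3 a ha z
    have := (hy' a)
    have := haz.symm
    grind
  have hDx : ∀ u ∈ D, ¬ G.Adj u x := by
    intro u hu h
    have := hx' u h.symm
    grind
  have hsp : ∀ u ∈ D, (nbr G u ∩ (A₀ ∪ B.erase b₁)).card ≤
      (nbr G u ∩ A₀.erase x).card + (nbr G u ∩ B.erase b₁).card := by
    intro u hu
    refine (Finset.card_le_card ?_).trans (Finset.card_union_le _ _)
    have := hDx u hu
    intro z hz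
    simp only [Finset.mem_inter, mem_nbr, Finset.mem_union, Finset.mem_erase] at hz ⊢
    by_cases hzx : z = x
    · subst hzx; tauto
    · tauto
  have he₀ := Finset.card_erase_of_mem hx₀
  have hbΩ : ∃ s ∈ A₀ ∪ B.erase b₁, s ∈ Ω := by
    obtain ⟨b, hb⟩ : (B.erase b₁).Nonempty := by rw [← Finset.card_pos]; omega
    have := hBm b
    exact ⟨b, by grind, by grind⟩
  have hnone : ∀ u (T : Finset V), (¬ ∃ t ∈ T, G.Adj u t) → (nbr G u ∩ T).card = 0 := by
    intro u T h
    rw [Finset.card_eq_zero, Finset.eq_empty_iff_forall_notMem]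
    intro z hz
    simp only [Finset.mem_inter, mem_nbr] at hz
    exact h ⟨z, hz.2, hz.1⟩
  rcases C.step R (T := B.erase b₁) (by rw [← Finset.card_pos]; omega)
    Finset.subset_union_right (fun b hb => ((hBm b).mp (Finset.mem_of_mem_erase hb)).1)
    q (by omega) ⟨1, 2, Or.inr rfl, fun i hi b hb =>
      bip_path i hd₀ hcomp₀ hx₀ hb (by omega) (by omega)⟩ (by
    intro u hu
    have huΩ := R.sub hu
    have h1 := hsp u hu
    have h2 := Finset.card_le_card (Finset.inter_subset_right (s₁ := nbr G u) (s₂ := A₀.erase x))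
    have h3 := Finset.card_le_card (Finset.inter_subset_right (s₁ := nbr G u) (s₂ := B.erase b₁))
    have h4 : (nbr G u ∩ B.erase b₁).card ≤ (nbr G u ∩ B).card :=
      Finset.card_le_card (by grind)
    by_cases hb : ∃ b ∈ B.erase b₁, G.Adj u b
    · right
      refine ⟨?_, hb⟩
      by_cases ha : ∃ a ∈ A₀.erase x, G.Adj u a
      · obtain ⟨a, ha, hua⟩ := ha
        have := hbook a u (by grind) (by grind) huΩ hua
        omega
      · have h5 := hnone u _ ha
        rcases Nat.lt_or_ge q A.card with h6 | h6
        · omega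
        · have h7 : A₀ = A := Finset.eq_of_subset_of_card_le hA₀ (by omega)
          have := hfew u huΩ (by have := R.disj u hu; grind)
          omega
    · left
      have h5 := hnone u _ hb
      omega) with h | ⟨E, hE, w, R', hE'⟩
  · exact hN h
  rcases Nat.lt_or_ge q 2 with h2 | h2
  · have hA0 : A₀ = {x} := by
      obtain ⟨a, ha⟩ := Finset.card_eq_one.mp (show A₀.card = 1 by omega)
      rw [ha] at hx₀ ⊢
      rw [Finset.mem_singleton.mp hx₀]
    refine hN (C.reg_cut R' hbΩ fun e he s hs hes => ?_)
    have := hE' e he s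
    grind
  · rcases C.step R' (T := A₀.erase x) (by rw [← Finset.card_pos]; omega) (by grind) (by grind)
      (q - 1) (by omega) ⟨2, 2, Or.inr rfl, fun i hi a ha =>
        bip_path2 i hd₀ hcomp₀ hx₀ (by grind) (by grind) (by omega) (by omega)⟩ (by
      intro u hu
      have h1 := hsp u (hE hu)
      have h2 := Finset.card_le_card (Finset.inter_subset_right (s₁ := nbr G u)
        (s₂ := A₀.erase x))
      have h3 := hnone u (B.erase b₁) (by
        rintro ⟨t, ht, h⟩
        exact hE' u hu t ht h)
      by_cases ha : ∃ t ∈ A₀.erase x, G.Adj u t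
      · exact Or.inr ⟨by omega, ha⟩
      · have h4 := hnone u _ ha
        left
        omega) with h | ⟨F, hF, w', R'', hF'⟩
    · exact hN h
    · refine hN (C.reg_cut R'' hbΩ fun e he s hs hes => ?_)
      have := hE' e (hF he) s
      have := hF' e he s
      grind

/-- The single vertex `x` is a balanced side, so a largest one exists. -/
lemma Ctx.exists_side (C : Ctx G Ω x y k) (hk : 2 ≤ k) (hN : ¬ Adm G k x y) :
    ∃ A, Side G Ω x A ∧ ∀ A', Side G Ω x A' → A'.card ≤ A.card := by
  classical
  have h := C.two_le_nbr hk hN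
  have h1 : Side G Ω x {x} := by
    refine ⟨by simp, by simp, ?_⟩
    have : nbr G x ⊆ com G Ω {x} := by
      intro u hu
      rw [mem_nbr] at hu
      rw [mem_com]
      exact ⟨C.toInst.nbr_mem hu, by simpa using hu⟩
    have := Finset.card_le_card this
    rw [Finset.card_singleton]
    omega
  obtain ⟨A, hA, hmax⟩ := (Finset.univ.filter fun A => Side G Ω x A).exists_max_image
    Finset.card ⟨{x}, by simpa using h1⟩
  simp only [Finset.mem_filter, Finset.mem_univ, true_and] at hA hmax
  exact ⟨A, hA, hmax⟩

/-- Neighbours of `y` in both classes of the core would be adjacent and form a triangle with `y`. -/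
lemma Ctx.bip_side (C : Ctx G Ω x y k) (hk : 3 ≤ k) (hS : Side G Ω x A)
    (hmax : ∀ A', Side G Ω x A' → A'.card ≤ A.card) (hN : ¬ Adm G k x y) :
    nbr G y ⊆ A ∨ nbr G y ⊆ com G Ω A := by
  have h := C.bip_core hk hS hmax hN
  by_contra hcon
  simp only [Finset.subset_iff, mem_nbr, not_or, not_forall] at hcon
  obtain ⟨⟨b, hb, hbA⟩, ⟨a, ha, haB⟩⟩ := hcon
  have h1 : a ∈ A := by have := h a ha; grind
  have h2 : b ∈ com G Ω A := by have := h b hb; grind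
  exact hN (C.symm.triangle (by omega) ha hb ((mem_com.mp h2).2 a h1)).symm

/-- The inductive step of the path theorem. -/
lemma Ctx.adm (C : Ctx G Ω x y k) (hk : 3 ≤ k) : Adm G k x y := by
  by_contra hN
  have hN' : ¬ Adm G k y x := fun h => hN h.symm
  obtain ⟨A, hA, hAm⟩ := C.exists_side (by omega) hN
  obtain ⟨A', hA', hAm'⟩ := C.symm.exists_side (by omega) hN'
  have hBx : ∀ b ∈ com G Ω A, b ∈ nbr G x := fun b hb => by
    rw [mem_nbr]; exact (mem_com.mp hb).2 x hA.mem
  have hBy : ∀ b ∈ com G Ω A', b ∈ nbr G y := fun b hb => by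
    rw [mem_nbr]; exact (mem_com.mp hb).2 y hA'.mem
  have hd := com_disj G Ω A; have hd' := com_disj G Ω A'
  rw [Finset.disjoint_left] at hd hd'
  have hne := hA.nonempty; have hne' := hA'.nonempty
  rcases C.bip_side hk hA hAm hN with h1 | h1 <;>
    rcases C.symm.bip_side hk hA' hAm' hN' with h2 | h2
  · have hyx : y ∉ nbr G x := by rw [mem_nbr]; exact fun h => C.nadj h
    have hxy : x ∉ nbr G y := by rw [mem_nbr]; exact fun h => C.nadj h.symm
    have e1 := Finset.card_erase_of_mem hA.mem
    have e2 := Finset.card_erase_of_mem hA'.mem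
    have c1 := Finset.card_le_card (s := com G Ω A') (t := A.erase x) (by grind)
    have c2 := Finset.card_le_card (s := com G Ω A) (t := A'.erase y) (by grind)
    have := hA.card
    have := hA'.card
    have := Finset.card_pos.mpr ⟨x, hA.mem⟩
    omega
  · obtain ⟨b, hb⟩ := hne
    exact hd (h1 (hBy b (h2 (hBx b hb)))) hb
  · obtain ⟨b, hb⟩ := hne'
    exact hd' (h2 (hBx b (h1 (hBy b hb)))) hb
  · refine hN (C.bip_twin hk hA hAm ?_ ?_)
    · intro u hu
      exact h1 (hBy u (h2 (by simpa using hu)))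
    · intro u
      exact ⟨fun hu => h1 (by simpa using hu), fun hu => by simpa using hBy u (h2 (hBx u hu))⟩

end CycMod

/-! ### The path theorem -/

namespace CycMod

variable {V : Type*} [Fintype V] [DecidableEq V]

/-- The roots of an instance are joined by a path. -/
lemma Inst.path {G : SimpleGraph V} {Ω : Finset V} {x y : V} (I : Inst G Ω x y) :
    ∃ n, Pth G n (insert x (insert y Ω)) x y := by
  have hxn := I.xnot; have hyn := I.ynot; have hxy := I.ne
  obtain ⟨D, hD, h1, h2, h3⟩ := region G (insert x Ω) y (by grind)
  by_cases hx : x ∈ D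
  · obtain ⟨n, h⟩ := h1.reach hx
    exact ⟨n, h.mono (by grind)⟩
  · -- the vertices joined to `y` without `x` have all their other neighbours in `{y}`
    have hDe : D = ∅ := by
      by_contra hne
      obtain ⟨e, he, z, hz, hz', hez⟩ := I.conn D (by grind)
        (Finset.nonempty_iff_ne_empty.mpr hne) y
      have := I.supp z e hez.symm
      have := h3 e he z
      grind
    have hy : ∀ u, ¬ G.Adj u y := by
      intro u hu
      have := I.supp u y hu
      have := h2 u
      have := hu.ne
      have := I.nadj
      grind
    obtain ⟨e, he, z, hz, hz', hez⟩ := I.conn Ω subset_rfl I.nonempty x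
    have := I.supp z e hez.symm
    have := hy e
    grind

/-- The path theorem: in a rooted instance whose non-root vertices have degree at least `k + 1`,
the roots are joined by `k` admissible paths. -/
theorem Inst.adm : ∀ (N : ℕ) (G : SimpleGraph V) (Ω : Finset V) (x y : V) (k : ℕ), Ω.card = N →
    Inst G Ω x y → (∀ u ∈ Ω, k + 1 ≤ (nbr G u).card) → Adm G k x y := by
  intro N
  induction N using Nat.strong_induction_on with
  | _ N ih =>
    intro G Ω x y k hN I hdeg
    have C : Ctx G Ω x y k := ⟨I, hdeg, fun G' Ω' x' y' k' hc I' hd' =>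
      ih _ (hN ▸ hc) G' Ω' x' y' k' rfl I' hd'⟩
    rcases Nat.lt_or_ge k 3 with hk | hk
    · interval_cases k
      · exact ⟨0, 1, Or.inl rfl, by omega⟩
      · obtain ⟨n, h⟩ := I.path
        exact AP.one (h.mono (Finset.subset_univ _))
      · obtain ⟨u, hu⟩ := I.nonempty
        have hx := I.xnot
        exact (two_paths _ G Ω x y x rfl I (fun u hu _ => hdeg u hu)
          ⟨u, hu, fun h => hx (h ▸ hu)⟩).imp fun n h => h.mono (Finset.subset_univ _)
    · exact C.adm hk

end CycMod

/-! ### Blocks, residues and maximum cuts -/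

namespace CycMod

/-- `G` has a cycle of length `n`. -/
def Cyc {V : Type*} (G : SimpleGraph V) (n : ℕ) : Prop :=
  ∃ (v : V) (c : G.Walk v v), c.IsCycle ∧ c.length = n

section numbers

lemma exists_residue {k : ℕ} (hk : 0 < k) (s : ℤ) : ∃ i : ℕ, i < k ∧ (i : ℤ) ≡ s [ZMOD k] := by
  have hk' : (k : ℤ) ≠ 0 := by omega
  have h1 := Int.emod_nonneg s hk'
  have h2 := Int.emod_lt_of_pos s (show (0 : ℤ) < k by omega)
  refine ⟨(s % k).toNat, by omega, ?_⟩
  rw [Int.toNat_of_nonneg h1]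
  exact Int.mod_modEq s k

/-- For odd `k` the steps one and two are both coprime to `k`, so `k` terms cover all residues. -/
lemma AP.odd {k : ℕ} {P : ℕ → Prop} (hk : k % 2 = 1) (h : AP k P) (r : ℤ) :
    ∃ n, P n ∧ (n : ℤ) ≡ r [ZMOD k] := by
  obtain ⟨a, d, hd, h⟩ := h
  obtain ⟨j, rfl⟩ : ∃ j, k = 2 * j + 1 := ⟨k / 2, by omega⟩
  rcases hd with rfl | rfl
  · obtain ⟨i, hi, h1⟩ := exists_residue (k := 2 * j + 1) (by omega) (r - a)
    refine ⟨_, h i hi, ?_⟩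
    have := h1.add_left (a : ℤ)
    push_cast at this ⊢
    simpa using this
  · -- `j + 1` is the inverse of `2`
    obtain ⟨i, hi, h1⟩ := exists_residue (k := 2 * j + 1) (by omega) ((r - a) * (j + 1))
    refine ⟨_, h i hi, ?_⟩
    have h2 := (h1.mul_left 2).add_left (a : ℤ)
    have h3 : (a : ℤ) + 2 * ((r - a) * (j + 1)) ≡ r [ZMOD ((2 * j + 1 : ℕ) : ℤ)] := by
      rw [Int.modEq_iff_dvd]
      exact ⟨-(r - a), by push_cast; ring⟩
    exact_mod_cast h2.trans h3

/-- Terms of equal parity have difference two, so `m` of them cover all residues modulo `2m` of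
that parity. -/
lemma AP.even {m p : ℕ} {P : ℕ → Prop} (hm : 0 < m) (h : AP m fun n => P n ∧ n % 2 = p) {r : ℤ}
    (hr : r % 2 = p) : ∃ n, P n ∧ (n : ℤ) ≡ r [ZMOD ((2 * m : ℕ) : ℤ)] := by
  obtain ⟨a, d, hd, h⟩ := h
  have h0 := (h 0 hm).2
  have key : ∃ i < m, ((a + d * i : ℕ) : ℤ) ≡ r [ZMOD ((2 * m : ℕ) : ℤ)] := by
    rcases hd with rfl | rfl
    · have hm1 : m = 1 := by
        by_contra hne
        have := (h 1 (by omega)).2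
        omega
      subst hm1
      refine ⟨0, by omega, ?_⟩
      rw [Int.modEq_iff_dvd]
      push_cast
      omega
    · obtain ⟨t, ht⟩ : ∃ t : ℤ, r - a = 2 * t := ⟨(r - a) / 2, by omega⟩
      obtain ⟨i, hi, h1⟩ := exists_residue hm t
      refine ⟨i, hi, ?_⟩
      rw [Int.modEq_iff_dvd] at h1 ⊢
      obtain ⟨q, hq⟩ := h1
      refine ⟨q, ?_⟩
      push_cast
      linear_combination ht + 2 * hq
  obtain ⟨i, hi, h1⟩ := key
  exact ⟨_, (h i hi).1, h1⟩

end numbers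

variable {V : Type*}

lemma Pth.cyc {G K : SimpleGraph V} {n : ℕ} {D : Finset V} {x y : V} (hK : K ≤ G)
    (hxy : G.Adj x y) (hn : ¬ K.Adj x y) (h : Pth K n D x y) : Cyc G (n + 1) := by
  obtain ⟨p, h1, h2, -⟩ := h
  refine ⟨y, Walk.cons hxy.symm (p.mapLe hK), ?_, by simp [h2]⟩
  rw [Walk.cons_isCycle_iff]
  refine ⟨h1.mapLe hK, fun h => hn ?_⟩
  rw [Walk.edges_mapLe_eq_edges] at h
  exact (p.adj_of_mem_edges h).symm

lemma Pth.parity {H : SimpleGraph V} {c : V → Bool} (hc : ∀ u v, H.Adj u v → c u ≠ c v) {n : ℕ}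
    {D : Finset V} {x y : V} (h : Pth H n D x y) : n % 2 = if c x = c y then 0 else 1 := by
  obtain ⟨p, -, rfl, -⟩ := h
  induction p with
  | nil => simp
  | @cons u v w huv q ih =>
    have := hc u v huv
    rw [Walk.length_cons]
    cases h1 : c u <;> cases h2 : c v <;> cases h3 : c w <;> simp_all <;> omega

/-- Every nonempty vertex set sends an edge to the rest of the graph avoiding any given vertex
outside, unless that vertex is the whole rest. -/
def Robust (G : SimpleGraph V) : Prop :=
  ∀ E : Finset V, E.Nonempty → ∀ w ∉ E, (∃ v, v ∉ E ∧ v ≠ w) →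
    ∃ e ∈ E, ∃ z, z ∉ E ∧ z ≠ w ∧ G.Adj e z

/-- Every nonempty proper vertex set sends an edge to its complement. -/
def Joined (G : SimpleGraph V) : Prop :=
  ∀ E : Finset V, E.Nonempty → (∃ v, v ∉ E) → ∃ e ∈ E, ∃ z, z ∉ E ∧ G.Adj e z

lemma robust_of_twoConnected [Fintype V] {G : SimpleGraph V} (h : TwoConnected G) : Robust G := by
  rintro E ⟨e, he⟩ w hw ⟨v, hv, hvw⟩
  have hew : e ≠ w := fun h => hw (h ▸ he)
  obtain ⟨p⟩ := (h.2.2 w).preconnected ⟨e, by simpa using hew⟩ ⟨v, by simpa using hvw⟩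
  obtain ⟨d, -, h1, h2⟩ := p.exists_boundary_dart {u | (u : V) ∈ E} he hv
  exact ⟨d.fst, h1, d.snd, h2, fun h => d.snd.2 h, d.adj⟩

lemma joined_of_connected {G : SimpleGraph V} (h : G.Connected) : Joined G := by
  rintro E ⟨e, he⟩ ⟨v, hv⟩
  obtain ⟨p⟩ := h.preconnected e v
  obtain ⟨d, -, h1, h2⟩ := p.exists_boundary_dart {u | u ∈ E} he hv
  exact ⟨d.fst, h1, d.snd, h2, d.adj⟩

variable [Fintype V] [DecidableEq V]

/-- Admissible paths inside a block-like set `E` with a single outside attachment `w`, between `w`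
and a vertex of `E`, not using a possible edge between the two. -/
lemma block {H : SimpleGraph V} {E : Finset V} {w y : V} {m : ℕ} (hm : 0 < m) (hw : w ∉ E)
    (hy : y ∈ E) (hE : ∀ e ∈ E, ∀ z, H.Adj e z → z ∈ E ∨ z = w)
    (hmin : ∀ F ⊆ E, F ≠ E → F.Nonempty → ∀ w', ∃ e ∈ F, ∃ z, z ∉ F ∧ z ≠ w' ∧ H.Adj e z)
    (hdeg : ∀ e ∈ E, m + 1 ≤ (nbr H e).card) :
    AP m fun n => Pth (H.deleteEdges {s(w, y)}) n (insert w E) w y := by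
  have hK : ∀ a b, a ≠ w → a ≠ y → ((H.deleteEdges {s(w, y)}).Adj a b ↔ H.Adj a b) := by
    intro a b h1 h2
    rw [deleteEdges_adj]
    simp only [Set.mem_singleton_iff, Sym2.eq_iff]
    tauto
  obtain ⟨K, hKdef⟩ : ∃ K, K = H.deleteEdges {s(w, y)} := ⟨_, rfl⟩
  rw [← hKdef] at hK ⊢
  have hwy : y ≠ w := fun h => hw (h ▸ hy)
  have hDne : (E.erase y).Nonempty := by
    by_contra h
    rw [Finset.not_nonempty_iff_eq_empty] at h
    have h1 : nbr H y ⊆ {w} := by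
      intro z hz
      rw [mem_nbr] at hz
      have := hE y hy z hz
      have := hz.ne
      have : z ∈ E → z ∈ E.erase y := by grind
      grind
    have := Finset.card_le_card h1
    have := hdeg y hy
    rw [Finset.card_singleton] at *
    omega
  have hF : ∀ F ⊆ E.erase y, F.Nonempty → ∀ w', ∃ e ∈ F, ∃ z, z ∉ F ∧
      (z ∈ E.erase y ∨ z = y ∨ z = w) ∧ z ≠ w' ∧ K.Adj e z := by
    intro F hF hne w'
    obtain ⟨e, he, z, hz, hzw, hez⟩ := hmin F (hF.trans (Finset.erase_subset _ _)) (by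
      rintro rfl
      simpa using hF hy) hne w'
    have := hE e (by grind) z hez
    have := hK e z
    exact ⟨e, he, z, hz, by grind, hzw, by grind⟩
  obtain ⟨G', t₀, h1, h2, h3⟩ := contract_one (G := K) (D := E.erase y) (t := w) (v := y)
    (by grind) (by simp) hwy hDne (by
      intro F hFE hne
      obtain ⟨e, he, z, hz, hz', hzw, hez⟩ := hF F hFE hne w
      exact ⟨e, he, z, hz, by tauto, hez⟩) (by
      intro F hFE hne hat w'
      obtain ⟨e, he, z, hz, hz', hzw, hez⟩ := hF F hFE hne w'
      have := hat e he
      exact ⟨e, he, z, hz, by grind, hzw, hez⟩)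
  refine AP.imp (Inst.adm _ G' _ t₀ y m rfl h1 ?_) fun n hn => (h3 n hn).mono (by grind)
  intro u hu
  refine ((hdeg u (Finset.mem_of_mem_erase hu)).trans (Finset.card_le_card ?_)).trans (h2 u hu)
  intro z hz
  rw [mem_nbr] at hz
  have := hE u (Finset.mem_of_mem_erase hu) z hz
  have := hK u z
  rw [Finset.mem_inter, mem_nbr]
  grind

/-- In a robust graph, the block may be taken to be everything but one root. -/
lemma Robust.paths {H : SimpleGraph V} (hH : Robust H) (hJ : Joined H) {m : ℕ} (hm : 0 < m)
    (hdeg : ∀ v, m + 1 ≤ (nbr H v).card) {x y : V} (hxy : x ≠ y) :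
    AP m fun n => Pth (H.deleteEdges {s(x, y)}) n Finset.univ x y := by
  refine (block (E := Finset.univ.erase x) hm (by simp) (by simpa using hxy.symm) (by grind)
    ?_ (fun e _ => hdeg e)).imp fun n h => h.mono (Finset.subset_univ _)
  intro F hF hFE hne w'
  have hxF : x ∉ F := fun h => by simpa using hF h
  by_cases hw' : w' ∈ F
  · obtain ⟨e, he, z, hz, hez⟩ := hJ F hne ⟨x, hxF⟩
    exact ⟨e, he, z, hz, by grind, hez⟩
  · obtain ⟨z, hz, hzF⟩ : ∃ z, z ≠ x ∧ z ∉ F := by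
      by_contra h
      push Not at h
      exact hFE (hF.antisymm (by grind))
    refine hH F hne w' hw' ?_
    by_cases hxw : x = w'
    · exact ⟨z, hzF, hxw ▸ hz⟩
    · exact ⟨x, hxF, hxw⟩

lemma odd_case {G : SimpleGraph V} (hG : Robust G) (hJ : Joined G) {k : ℕ} (hk : k % 2 = 1)
    (hdeg : ∀ v, k + 1 ≤ (nbr G v).card) (r : ℤ) [Nonempty V] :
    ∃ n, Cyc G n ∧ (n : ℤ) ≡ r [ZMOD k] := by
  obtain ⟨x⟩ := ‹Nonempty V›
  obtain ⟨y, hy⟩ : (nbr G x).Nonempty := by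
    rw [← Finset.card_pos]
    have := hdeg x
    omega
  rw [mem_nbr] at hy
  have h := hG.paths hJ (by omega) hdeg hy.ne
  refine AP.odd (P := Cyc G) hk (AP.shift (c := 1) h fun n hn => ?_) r
  rw [add_comm]
  exact hn.cyc (deleteEdges_le _) hy (by simp)

/-- A maximum cut: at least half of the edges leaving any set are cut. -/
lemma exists_max_cut (G : SimpleGraph V) : ∃ c : V → Bool, ∀ X : Finset V, ∀ (P Q : Finset (V × V)),
    (∀ p, p ∈ P ↔ p.1 ∈ X ∧ p.2 ∉ X ∧ G.Adj p.1 p.2 ∧ c p.1 = c p.2) →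
    (∀ p, p ∈ Q ↔ p.1 ∈ X ∧ p.2 ∉ X ∧ G.Adj p.1 p.2 ∧ c p.1 ≠ c p.2) → P.card ≤ Q.card := by
  classical
  let f : (V → Bool) → ℕ := fun c =>
    (Finset.univ.filter fun p : V × V => G.Adj p.1 p.2 ∧ c p.1 ≠ c p.2).card
  obtain ⟨c, hc⟩ := Finite.exists_max f
  refine ⟨c, fun X P Q hP hQ => ?_⟩
  -- the number of ordered cut pairs, split according to whether they cross `X`
  have key : ∀ (c' : V → Bool) (I S : Finset (V × V)),
      (∀ p, p ∈ I ↔ (p.1 ∈ X ↔ p.2 ∈ X) ∧ G.Adj p.1 p.2 ∧ c' p.1 ≠ c' p.2) →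
      (∀ p, p ∈ S ↔ p.1 ∈ X ∧ p.2 ∉ X ∧ G.Adj p.1 p.2 ∧ c' p.1 ≠ c' p.2) →
      f c' = I.card + 2 * S.card := by
    intro c' I S hI hS
    have h1 : (Finset.univ.filter fun p : V × V => G.Adj p.1 p.2 ∧ c' p.1 ≠ c' p.2) =
        I ∪ (S ∪ S.image Prod.swap) := by
      ext ⟨a, b⟩
      have := G.adj_comm a b
      simp only [Finset.mem_filter, Finset.mem_univ, true_and, Finset.mem_union, hI, hS,
        Finset.mem_image, Prod.exists, Prod.swap_prod_mk, Prod.mk.injEq]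
      constructor
      · intro h
        by_cases ha : a ∈ X <;> by_cases hb : b ∈ X
        · left; tauto
        · right; left; tauto
        · right; right
          exact ⟨b, a, ⟨hb, ha, h.1.symm, h.2.symm⟩, rfl, rfl⟩
        · left; tauto
      · rintro (h | h | ⟨a', b', h, rfl, rfl⟩)
        · tauto
        · tauto
        · exact ⟨h.2.2.1.symm, h.2.2.2.symm⟩
    show Finset.card _ = _
    rw [h1, Finset.card_union_of_disjoint, Finset.card_union_of_disjoint,
      Finset.card_image_of_injective _ Prod.swap_injective]
    · ring
    · rw [Finset.disjoint_left]
      intro p hp hp'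
      obtain ⟨q, hq, rfl⟩ := Finset.mem_image.mp hp'
      rw [hS] at hp hq
      simp only [Prod.fst_swap, Prod.snd_swap] at hp
      tauto
    · rw [Finset.disjoint_left]
      intro p hp hp'
      rw [hI] at hp
      rcases Finset.mem_union.mp hp' with h | h
      · rw [hS] at h
        tauto
      · obtain ⟨q, hq, rfl⟩ := Finset.mem_image.mp h
        rw [hS] at hq
        simp only [Prod.fst_swap, Prod.snd_swap] at hp
        tauto
  obtain ⟨I, hI⟩ : ∃ I : Finset (V × V), ∀ p, p ∈ I ↔
      (p.1 ∈ X ↔ p.2 ∈ X) ∧ G.Adj p.1 p.2 ∧ c p.1 ≠ c p.2 :=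
    ⟨Finset.univ.filter fun p => (p.1 ∈ X ↔ p.2 ∈ X) ∧ G.Adj p.1 p.2 ∧ c p.1 ≠ c p.2, by simp⟩
  have h1 := key c I Q hI hQ
  have h2 := key (fun v => if v ∈ X then !c v else c v) I P (by
    intro p
    rw [hI]
    by_cases ha : p.1 ∈ X <;> by_cases hb : p.2 ∈ X <;> simp [ha, hb]) (by
    intro p
    rw [hP]
    by_cases ha : p.1 ∈ X <;> by_cases hb : p.2 ∈ X <;> simp [ha, hb])
  have := hc (fun v => if v ∈ X then !c v else c v)
  omega

end CycMod

/-! ### Cycles of both parities -/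

namespace CycMod

variable {V : Type*} [Fintype V] [DecidableEq V]

/-- The bipartite subgraph cut out by a two-colouring. -/
def cutGraph (G : SimpleGraph V) (c : V → Bool) : SimpleGraph V where
  Adj u v := G.Adj u v ∧ c u ≠ c v
  symm := ⟨fun _ _ h => ⟨h.1.symm, h.2.symm⟩⟩
  loopless := ⟨fun _ h => h.2 rfl⟩

/-- The bipartite subgraph of a maximum cut stays connected and keeps at least half of every
degree. -/
lemma exists_cut {G : SimpleGraph V} (hG : Joined G) {m : ℕ}
    (hdeg : ∀ v, 2 * m + 1 ≤ (nbr G v).card) :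
    ∃ c : V → Bool, Joined (cutGraph G c) ∧ ∀ v, m + 1 ≤ (nbr (cutGraph G c) v).card := by
  obtain ⟨c, hc⟩ := exists_max_cut G
  classical
  refine ⟨c, ?_, fun v => ?_⟩
  · intro E hne hE
    by_contra hcon
    push Not at hcon
    obtain ⟨e, he, z, hz, hez⟩ := hG E hne hE
    have h := hc E (Finset.univ.filter fun p => p.1 ∈ E ∧ p.2 ∉ E ∧ G.Adj p.1 p.2 ∧ c p.1 = c p.2)
      ∅ (by simp) (by
        intro p
        have := hcon p.1
        simp only [cutGraph, Finset.notMem_empty, false_iff] at this ⊢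
        rintro ⟨h1, h2, h3⟩
        exact this h1 p.2 h2 h3)
    rw [Finset.card_empty, Nat.le_zero, Finset.card_eq_zero] at h
    have hmem : (e, z) ∈ Finset.univ.filter fun p : V × V =>
        p.1 ∈ E ∧ p.2 ∉ E ∧ G.Adj p.1 p.2 ∧ c p.1 = c p.2 := by
      simp only [Finset.mem_filter, Finset.mem_univ, true_and]
      refine ⟨he, hz, hez, ?_⟩
      by_contra hne'
      exact hcon e he z hz ⟨hez, hne'⟩
    rw [h] at hmem
    simp at hmem
  · have hinj : Function.Injective fun u : V => (v, u) := fun a b h => by simpa using h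
    have h := hc {v} ((nbr G v \ nbr (cutGraph G c) v).image fun u => (v, u))
      ((nbr (cutGraph G c) v).image fun u => (v, u)) (by
        rintro ⟨a, b⟩
        simp only [cutGraph, Finset.mem_image, Finset.mem_sdiff, mem_nbr, Prod.mk.injEq,
          Finset.mem_singleton]
        constructor
        · rintro ⟨u, ⟨h1, h2⟩, rfl, rfl⟩
          have := h1.ne
          grind
        · rintro ⟨rfl, h1, h2, h3⟩
          exact ⟨b, ⟨h2, by tauto⟩, rfl, rfl⟩) (by
        rintro ⟨a, b⟩
        simp only [cutGraph, Finset.mem_image, mem_nbr, Prod.mk.injEq, Finset.mem_singleton]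
        constructor
        · rintro ⟨u, ⟨h1, h2⟩, rfl, rfl⟩
          have := h1.ne
          grind
        · rintro ⟨rfl, h1, h2, h3⟩
          exact ⟨b, ⟨h2, h3⟩, rfl, rfl⟩)
    rw [Finset.card_image_of_injective _ hinj, Finset.card_image_of_injective _ hinj,
      Finset.card_sdiff_of_subset (fun u hu => by
        rw [mem_nbr] at hu ⊢
        exact hu.1)] at h
    have := hdeg v
    omega

/-- Cycles of both parities, `m` of each with lengths in progression. If the cut graph is robust,
close up paths between the ends of an edge; otherwise work in a smallest set that a single vertex
separates from the rest, and use an edge of `G` leaving it to change parity. -/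
lemma even_case {G : SimpleGraph V} (hG : Robust G) (hJ : Joined G) {m : ℕ} (hm : 0 < m)
    (hdeg : ∀ v, 2 * m + 1 ≤ (nbr G v).card) (hnb : ∀ c : V → Bool, ∃ u v, G.Adj u v ∧ c u = c v) :
    (AP m fun n => Cyc G n ∧ n % 2 = 0) ∧ AP m fun n => Cyc G n ∧ n % 2 = 1 := by
  classical
  obtain ⟨c, hJH, hdH⟩ := exists_cut hJ hdeg
  obtain ⟨H, hH⟩ : ∃ H, H = cutGraph G c := ⟨_, rfl⟩
  rw [← hH] at hJH hdH
  have hHG : H ≤ G := by rw [hH]; exact fun a b h => h.1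
  have hHc : ∀ a b, H.Adj a b → c a ≠ c b := by rw [hH]; exact fun a b h => h.2
  have hHm : ∀ a b, G.Adj a b → ¬ H.Adj a b → c a = c b := by
    intro a b h1 h2
    by_contra h3
    rw [hH] at h2
    exact h2 ⟨h1, h3⟩
  -- closing up a path in `H` by an edge
  have close : ∀ (x y : V) (D : Finset V), G.Adj x y →
      (AP m fun n => Pth (H.deleteEdges {s(x, y)}) n D x y) →
      AP m fun n => Cyc G n ∧ n % 2 = if c x = c y then 1 else 0 := by
    intro x y D hxy h
    refine AP.shift (c := 1) h fun n hn => ?_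
    rw [add_comm]
    refine ⟨hn.cyc ((deleteEdges_le _).trans hHG) hxy (by simp), ?_⟩
    have := hn.parity (c := c) fun a b h => hHc a b (deleteEdges_le _ h)
    split_ifs at this ⊢ <;> omega
  by_cases hR : Robust H
  · obtain ⟨u, v, huv, hcuv⟩ := hnb c
    have h1 := close u v _ huv (hR.paths hJH hm hdH huv.ne)
    rw [if_pos hcuv] at h1
    obtain ⟨z, hz⟩ : (nbr H u).Nonempty := by
      rw [← Finset.card_pos]
      have := hdH u
      omega
    rw [mem_nbr] at hz
    have h2 := close u z _ (hHG hz) (hR.paths hJH hm hdH hz.ne)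
    rw [if_neg (hHc u z hz)] at h2
    exact ⟨h2, h1⟩
  · let P : Finset V → Prop := fun E => E.Nonempty ∧ ∃ w, w ∉ E ∧ (∃ v, v ∉ E ∧ v ≠ w) ∧
      ∀ e ∈ E, ∀ z, H.Adj e z → z ∈ E ∨ z = w
    have hP : ∃ E, P E := by
      unfold Robust at hR
      push Not at hR
      obtain ⟨E, h1, w, h2, h3, h4⟩ := hR
      refine ⟨E, h1, w, h2, h3, fun e he z hez => ?_⟩
      by_contra hcon
      push Not at hcon
      exact h4 e he z hcon.1 hcon.2 hez
    obtain ⟨E₀, hE₀⟩ := hP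
    obtain ⟨E, hEP, hEmin⟩ := (Finset.univ.filter P).exists_min_image Finset.card
      ⟨E₀, by simpa using hE₀⟩
    simp only [Finset.mem_filter, Finset.mem_univ, true_and] at hEP hEmin
    obtain ⟨hne, w, hw, ⟨v₀, hv₀, hv₀w⟩, hE⟩ := hEP
    have hblock : ∀ y ∈ E, AP m fun n => Pth (H.deleteEdges {s(w, y)}) n (insert w E) w y := by
      intro y hy
      refine block hm hw hy hE ?_ fun e _ => hdH e
      intro F hF hFE hFne w'
      by_cases hw' : w' ∈ F
      · obtain ⟨e, he, z, hz, hez⟩ := hJH F hFne ⟨w, fun h => hw (hF h)⟩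
        exact ⟨e, he, z, hz, fun h => hz (h ▸ hw'), hez⟩
      · by_contra hcon
        push Not at hcon
        have hlt := Finset.card_lt_card (Finset.ssubset_iff_subset_ne.mpr ⟨hF, hFE⟩)
        have hv : ∃ v, v ∉ F ∧ v ≠ w' := by
          by_cases h : v₀ = w'
          · exact ⟨w, fun h => hw (hF h), by rw [← h]; exact hv₀w.symm⟩
          · exact ⟨v₀, fun h => hv₀ (hF h), h⟩
        have := hEmin F ⟨hFne, w', hw', hv, fun e he z hez => by
          by_contra h
          push Not at h
          exact hcon e he z h.1 h.2 hez⟩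
        omega
    constructor
    · obtain ⟨y, hy, z, hz, hyz⟩ := hJH E hne ⟨w, hw⟩
      obtain rfl : z = w := (hE y hy z hyz).resolve_left hz
      have h := close z y _ (hHG hyz.symm) (hblock y hy)
      rwa [if_neg (hHc z y hyz.symm)] at h
    · obtain ⟨u, hu, v, hv, hvw, huv⟩ := hG E hne w hw ⟨v₀, hv₀, hv₀w⟩
      have hnuv : ¬ H.Adj u v := fun h => by have := hE u hu v h; tauto
      have hcuv := hHm u v huv hnuv
      -- a path from `v` to `w` outside `E`
      obtain ⟨n₀, hn₀⟩ : ∃ n, Pth H n (Finset.univ \ E) v w := by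
        obtain ⟨D, hD, d1, d2, d3⟩ := region H ((Finset.univ \ E).erase w) w (by simp)
        by_cases hvD : v ∈ D
        · obtain ⟨n, hn⟩ := d1.reach hvD
          exact ⟨n, hn.mono (by grind)⟩
        · exfalso
          obtain ⟨e, he, z, hz, hez⟩ := hJH (((Finset.univ \ E).erase w) \ D) ⟨v, by grind⟩
            ⟨w, by simp⟩
          have h1 := hE z
          have h2 := d2 e
          have h3 := d3 z
          have h4 := hez.symm
          grind
      refine AP.shift (c := n₀ + 1) (hblock u hu) fun n hn => ?_
      have hn' : Pth H n (insert w E) w u :=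
        hn.transfer fun a _ b _ h => deleteEdges_le _ h
      have hpath := hn₀.trans hn' (by grind)
      have hpar := hpath.parity hHc
      rw [if_pos hcuv.symm] at hpar
      rw [show n₀ + 1 + n = n₀ + n + 1 by ring]
      exact ⟨hpath.cyc hHG huv.symm fun h => hnuv h.symm, by omega⟩

end CycMod

/-- For every positive integer `k`, every 2-connected non-bipartite finite simple graph
of minimum degree at least `k + 1` contains cycles of all lengths modulo `k`. -/
theorem cycles_all_lengths_mod_k {V : Type*} [Fintype V] (k : ℕ) (hk : 0 < k)
    (G : SimpleGraph V) [DecidableRel G.Adj]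
    (h2 : TwoConnected G) (hnb : NonBipartite G)
    (hdeg : ∀ v : V, k + 1 ≤ G.degree v) :
    ∀ r : ℤ, ∃ (v : V) (c : G.Walk v v), c.IsCycle ∧
      (c.length : ℤ) ≡ r [ZMOD (k : ℤ)] := by
  classical
  intro r
  have hJ := CycMod.joined_of_connected h2.1
  have hR := CycMod.robust_of_twoConnected h2
  have hdeg' : ∀ v, k + 1 ≤ (CycMod.nbr G v).card := by
    intro v
    rw [show CycMod.nbr G v = G.neighborFinset v by ext; simp]
    exact hdeg v
  suffices h : ∃ n, CycMod.Cyc G n ∧ (n : ℤ) ≡ r [ZMOD k] by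
    obtain ⟨n, ⟨v, c, hc, rfl⟩, hn⟩ := h
    exact ⟨v, c, hc, hn⟩
  have : Nonempty V := h2.1.nonempty
  rcases Nat.mod_two_eq_zero_or_one k with h0 | h1
  · obtain ⟨m, rfl⟩ : ∃ m, k = 2 * m := ⟨k / 2, by omega⟩
    obtain ⟨he, ho⟩ := CycMod.even_case hR hJ (m := m) (by omega) hdeg' (by
      intro c
      by_contra hcon
      push Not at hcon
      refine hnb ⟨{v | c v = true}, {v | c v = false}, ?_, ?_, ?_, ?_⟩
      · ext v
        cases h : c v <;> simp [h]
      · ext v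
        cases h : c v <;> simp [h]
      · exact fun a ha b hb hab => hcon a b hab (ha.trans hb.symm)
      · exact fun a ha b hb hab => hcon a b hab (ha.trans hb.symm))
    rcases Int.emod_two_eq_zero_or_one r with hr | hr
    · exact he.even (by omega) (by exact_mod_cast hr)
    · exact ho.even (by omega) (by exact_mod_cast hr)
  · exact CycMod.odd_case hR hJ h1 hdeg' r
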